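/- arXiv:2105.08309 — 2 statements merged into one kernel-verified Lean document; each statement's English description precedes it below -/
import Mathlib

section
/- M̃ is surjective, so dim ker M̃ = 2n + 4. Moreover the Type I vectors are pairwise orthogonal and orthogonal to every Type II vector, the Type II vectors are linearly independent, and the Type I and Type II vectors together form a basis of ker M̃. -/
noncomputable section

/-! The decision graph `𝒯̃` for `G = 1`.  Its vertex set has `2n + 4` elements:
`z₀, z₁, …, z_{n+1}` (encoded `Sum.inl j`), `v₀, …, v_{n−1}` (encoded `Sum.inr (Sum.inl i)`),
`v̂₀` (encoded `Sum.inr (Sum.inr false)`) and `ẑ` (encoded `Sum.inr (Sum.inr true)`). -/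

/-- Vertices of the decision graph `𝒯̃`. -/
abbrev GraphV (n : ℕ) := Fin (n + 2) ⊕ Fin n ⊕ Bool

/-- Column indices of `M̃`: root/leaf columns, black edges, red edges, pseudo-edges
(`4n + 8` columns). -/
abbrev ColIdx (n : ℕ) := Fin (n + 2) ⊕ Fin (n + 2) ⊕ Fin (n + 2) ⊕ Fin (n + 2)

/-- Source of the red edge `r_i`: `r₀ = (z₀, v̂₀)`, `r_i = (v_{i−1}, z_i)` for `1 ≤ i ≤ n`,
`r_{n+1} = (ẑ, z_{n+1})`. -/
def redSrc (n : ℕ) (i : Fin (n + 2)) : GraphV n :=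
  if h0 : (i : ℕ) = 0 then Sum.inl 0
  else if h1 : (i : ℕ) = n + 1 then Sum.inr (Sum.inr true)
  else Sum.inr (Sum.inl ⟨(i : ℕ) - 1, by have := i.isLt; omega⟩)

/-- Target of the red edge `r_i`. -/
def redTgt (n : ℕ) (i : Fin (n + 2)) : GraphV n :=
  if (i : ℕ) = 0 then Sum.inr (Sum.inr false) else Sum.inl i

/-- Source of the black edge with index `i`:  `b̂₀ = (v̂₀, v₀)`, `b_i = (v_{i−1}, v_i)` for
`1 ≤ i ≤ n − 1`, `b̂_n = (v_{n−1}, ẑ)`, `b̂_{n+1} = (ẑ, v̂₀)`. -/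
def blackSrc (n : ℕ) (i : Fin (n + 2)) : GraphV n :=
  if h0 : (i : ℕ) = 0 then Sum.inr (Sum.inr false)
  else if h1 : (i : ℕ) = n + 1 then Sum.inr (Sum.inr true)
  else Sum.inr (Sum.inl ⟨(i : ℕ) - 1, by have := i.isLt; omega⟩)

/-- Target of the black edge with index `i`. -/
def blackTgt (n : ℕ) (i : Fin (n + 2)) : GraphV n :=
  if h0 : (i : ℕ) = n then Sum.inr (Sum.inr true)
  else if h1 : (i : ℕ) = n + 1 then Sum.inr (Sum.inr false)
  else Sum.inr (Sum.inl ⟨(i : ℕ), by have := i.isLt; omega⟩)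

/-- The columns of `M̃`: `α|z₀⟩` for `e_{z₀}`, `−α|z_j⟩` for `e_{z_j}`,
`β(|u⟩ − |v⟩)` for black edges, `γ(|u⟩ − |v⟩)` for red edges and `γ(|u⟩ + |v⟩)` for
pseudo-edges. -/
def col (n : ℕ) (α β γ : ℝ) : ColIdx n → EuclideanSpace ℂ (GraphV n)
  | Sum.inl j => (if j = 0 then (α : ℂ) else (-α : ℂ)) •
      EuclideanSpace.single (Sum.inl j) 1
  | Sum.inr (Sum.inl i) => (β : ℂ) •
      (EuclideanSpace.single (blackSrc n i) 1 - EuclideanSpace.single (blackTgt n i) 1)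
  | Sum.inr (Sum.inr (Sum.inl i)) => (γ : ℂ) •
      (EuclideanSpace.single (redSrc n i) 1 - EuclideanSpace.single (redTgt n i) 1)
  | Sum.inr (Sum.inr (Sum.inr i)) => (γ : ℂ) •
      (EuclideanSpace.single (redSrc n i) 1 + EuclideanSpace.single (redTgt n i) 1)

/-- The matrix `M̃`, as a linear map sending the standard basis vector of each column index
to the corresponding column. -/
def Mt (n : ℕ) (α β γ : ℝ) :
    EuclideanSpace ℂ (ColIdx n) →ₗ[ℂ] EuclideanSpace ℂ (GraphV n) :=
  (PiLp.basisFun 2 ℂ (ColIdx n)).constr ℂ (col n α β γ)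

/-- `|r_i^+⟩ = (|r̄_i⟩ + |r_i⟩)/√2`. -/
def rplus (n : ℕ) (i : Fin (n + 2)) : EuclideanSpace ℂ (ColIdx n) :=
  (((Real.sqrt 2)⁻¹ : ℝ) : ℂ) •
    (EuclideanSpace.single (Sum.inr (Sum.inr (Sum.inr i))) 1 +
      EuclideanSpace.single (Sum.inr (Sum.inr (Sum.inl i))) 1)

/-- `|r_i^−⟩ = (|r̄_i⟩ − |r_i⟩)/√2`. -/
def rminus (n : ℕ) (i : Fin (n + 2)) : EuclideanSpace ℂ (ColIdx n) :=
  (((Real.sqrt 2)⁻¹ : ℝ) : ℂ) •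
    (EuclideanSpace.single (Sum.inr (Sum.inr (Sum.inr i))) 1 -
      EuclideanSpace.single (Sum.inr (Sum.inr (Sum.inl i))) 1)

/-- Type I vectors: `−(√2/α)|e_{z₀}⟩ + (1/γ)|r₀⁺⟩` and, for `1 ≤ i ≤ n + 1`,
`(√2/α)|e_{z_i}⟩ + (1/γ)|r_i⁻⟩`. -/
def typeI (n : ℕ) (α γ : ℝ) (i : Fin (n + 2)) : EuclideanSpace ℂ (ColIdx n) :=
  if i = 0 then
    ((-(Real.sqrt 2 / α) : ℝ) : ℂ) • EuclideanSpace.single (Sum.inl 0) 1 +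
      ((γ⁻¹ : ℝ) : ℂ) • rplus n 0
  else
    ((Real.sqrt 2 / α : ℝ) : ℂ) • EuclideanSpace.single (Sum.inl i) 1 +
      ((γ⁻¹ : ℝ) : ℂ) • rminus n i

/-- Type II vectors: `(√2/β)|b̂₀⟩ − (1/γ)|r₀⁻⟩ + (1/γ)|r₁⁺⟩`; for `1 ≤ i ≤ n`,
`(√2/β)|bᵢ⟩ − (1/γ)|rᵢ⁺⟩ + (1/γ)|r_{i+1}⁺⟩`; and
`(√2/β)|b̂_{n+1}⟩ − (1/γ)|r_{n+1}⁺⟩ + (1/γ)|r₀⁻⟩`. -/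
def typeII (n : ℕ) (β γ : ℝ) (i : Fin (n + 2)) : EuclideanSpace ℂ (ColIdx n) :=
  if h0 : (i : ℕ) = 0 then
    ((Real.sqrt 2 / β : ℝ) : ℂ) • EuclideanSpace.single (Sum.inr (Sum.inl 0)) 1 -
      ((γ⁻¹ : ℝ) : ℂ) • rminus n 0 + ((γ⁻¹ : ℝ) : ℂ) • rplus n 1
  else if h1 : (i : ℕ) = n + 1 then
    ((Real.sqrt 2 / β : ℝ) : ℂ) • EuclideanSpace.single (Sum.inr (Sum.inl i)) 1 -
      ((γ⁻¹ : ℝ) : ℂ) • rplus n i + ((γ⁻¹ : ℝ) : ℂ) • rminus n 0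
  else
    ((Real.sqrt 2 / β : ℝ) : ℂ) • EuclideanSpace.single (Sum.inr (Sum.inl i)) 1 -
      ((γ⁻¹ : ℝ) : ℂ) • rplus n i +
      ((γ⁻¹ : ℝ) : ℂ) • rplus n ⟨(i : ℕ) + 1, by have := i.isLt; omega⟩

open scoped InnerProductSpace

/-! The red edges form a perfect matching of the `2n + 4` vertices, and `M̃` sends `|r_i⁺⟩` and
`|r_i⁻⟩` to `√2 γ` times the source and the target of `r_i`. So every vertex `u` has exactly one
vector `h_u` among the `|r_i^±⟩` with `M̃ h_u = √2 γ |u⟩`; in particular `M̃` is surjective. A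
Type I or Type II vector is a multiple of a root, leaf or black basis vector, whose image involves
at most two vertices, corrected by the `h_u` of these vertices so as to land in the kernel. Together
with the root, leaf and black basis vectors the `h_u` are orthonormal. Orthogonality can thus be
read off from the endpoints of the edges, and independence holds already modulo the span of the
`h_u`. There are `2n + 4` Type I and Type II vectors, which is the dimension of the
kernel. -/

section General

theorem linearIndependent_smul_add_of_mem_span {K E ι κ : Type*} [DivisionRing K] [AddCommGroup E]
    [Module K E] {f : ι → E} {g : κ → E} (hfg : LinearIndependent K (Sum.elim f g)) {a : ι → K}
    (ha : ∀ i, a i ≠ 0) {y : ι → E} (hy : ∀ i, y i ∈ Submodule.span K (Set.range g)) :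
    LinearIndependent K (fun i => a i • f i + y i) := by
  obtain ⟨hf, -, hdisj⟩ := linearIndependent_sum.1 hfg
  let q := (Submodule.span K (Set.range g)).mkQ
  have hqf : LinearIndependent K (q ∘ f) := hf.map (by rwa [Submodule.ker_mkQ])
  refine LinearIndependent.of_comp q ?_
  convert hqf.units_smul (fun i => Units.mk0 (a i) (ha i)) using 1
  ext i
  have hqy : q (y i) = 0 := (Submodule.Quotient.mk_eq_zero _).2 (hy i)
  simp [hqy, Units.smul_def]

theorem surjective_of_apply_eq_smul_basis {K E F κ : Type*} [DivisionRing K] [AddCommGroup E]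
    [Module K E] [AddCommGroup F] [Module K F] (b : Module.Basis κ K F) {f : E →ₗ[K] F} {v : κ → E}
    {c : K} (hc : c ≠ 0) (hv : ∀ k, f (v k) = c • b k) : Function.Surjective f := by
  rw [← LinearMap.range_eq_top, eq_top_iff, ← b.span_eq, Submodule.span_le]
  rintro _ ⟨k, rfl⟩
  exact ((LinearMap.range f).smul_mem_iff hc).1 ⟨v k, hv k⟩

theorem orthonormal_sumElim_add_sub {𝕜 E ι κ : Type*} [RCLike 𝕜] [NormedAddCommGroup E]
    [InnerProductSpace 𝕜 E] {v : ι ⊕ κ ⊕ κ → E} (hv : Orthonormal 𝕜 v) {c : 𝕜}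
    (hc : 2 * ‖c‖ ^ 2 = 1) :
    Orthonormal 𝕜 (Sum.elim (v ∘ Sum.inl) (Sum.elim
      (fun k => c • (v (Sum.inr (Sum.inl k)) + v (Sum.inr (Sum.inr k))))
      (fun k => c • (v (Sum.inr (Sum.inl k)) - v (Sum.inr (Sum.inr k)))))) := by
  classical
  have hc' : 2 * (c * starRingEnd 𝕜 c) = 1 := by
    rw [RCLike.mul_conj]
    exact_mod_cast hc
  rw [orthonormal_iff_ite] at hv ⊢
  rintro (i | i | i) (j | j | j) <;>
    simp only [Sum.elim_inl, Sum.elim_inr, Function.comp_apply, inner_add_left, inner_add_right,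
      inner_sub_left, inner_sub_right, inner_smul_left, inner_smul_right, hv, Sum.inl.injEq,
      Sum.inr.injEq, reduceCtorEq, if_false]
  all_goals grind

theorem ofReal_inv_sqrt_two_mul_two : (((√2)⁻¹ : ℝ) : ℂ) * 2 = (√2 : ℝ) := by
  rw [← Complex.ofReal_ofNat, ← Complex.ofReal_mul, ← div_eq_inv_mul, Real.div_sqrt]

end General

section DecisionGraph

variable (n : ℕ)

/-- The end of a red edge at the vertex `u`: `inl i` if `u` is the source of `r_i` and `inr i` if it
is the target of `r_i`. It is unique, as the red edges form a perfect matching. -/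
def redEnd : GraphV n → Fin (n + 2) ⊕ Fin (n + 2)
  | Sum.inl j => if j = 0 then Sum.inl 0 else Sum.inr j
  | Sum.inr (Sum.inl k) => Sum.inl k.succ.castSucc
  | Sum.inr (Sum.inr false) => Sum.inr 0
  | Sum.inr (Sum.inr true) => Sum.inl (Fin.last (n + 1))

/-- The orthonormal frame of `ℂ^{4n+8}` adapted to `M̃`: the root and leaf basis vectors, the
black basis vectors, and for each vertex `u` the vector `|r_i⁺⟩` or `|r_i⁻⟩` that `M̃` sends to
`√2 γ |u⟩`. -/
def adaptedFrame : (Fin (n + 2) ⊕ Fin (n + 2)) ⊕ GraphV n → EuclideanSpace ℂ (ColIdx n) :=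
  Sum.elim (fun c => EuclideanSpace.single (Sum.elim Sum.inl (Sum.inr ∘ Sum.inl) c) 1)
    (Sum.elim (rplus n) (rminus n) ∘ redEnd n)

theorem adaptedFrame_inl_inl (i : Fin (n + 2)) :
    adaptedFrame n (Sum.inl (Sum.inl i)) = EuclideanSpace.single (Sum.inl i) 1 := rfl

theorem adaptedFrame_inl_inr (i : Fin (n + 2)) :
    adaptedFrame n (Sum.inl (Sum.inr i)) = EuclideanSpace.single (Sum.inr (Sum.inl i)) 1 := rfl

theorem adaptedFrame_inr (u : GraphV n) :
    adaptedFrame n (Sum.inr u) = Sum.elim (rplus n) (rminus n) (redEnd n u) := rfl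

theorem elim_redSrc_redTgt_redEnd (u : GraphV n) :
    Sum.elim (redSrc n) (redTgt n) (redEnd n u) = u := by
  rcases u with j | k | _ | _
  · by_cases hj : j = 0
    · simp [redEnd, redSrc, hj]
    · simp [redEnd, redTgt, hj]
  · simp [redEnd, redSrc, k.isLt.ne]
  · simp [redEnd, redTgt]
  · simp [redEnd, redSrc]

theorem redEnd_injective : Function.Injective (redEnd n) :=
  Function.LeftInverse.injective (elim_redSrc_redTgt_redEnd n)

theorem redEnd_blackSrc (i : Fin (n + 2)) :
    redEnd n (blackSrc n i) = if (i : ℕ) = 0 then Sum.inr 0 else Sum.inl i := by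
  unfold blackSrc
  split_ifs with h0 h1
  · rfl
  · exact congrArg Sum.inl (Fin.ext h1.symm)
  · exact congrArg Sum.inl (Fin.ext (by simp only [Fin.val_castSucc, Fin.val_succ]; omega))

theorem redEnd_blackTgt (i : Fin (n + 2)) :
    redEnd n (blackTgt n i) =
      if h : (i : ℕ) = n + 1 then Sum.inr 0 else Sum.inl ⟨i + 1, by omega⟩ := by
  unfold blackTgt
  split_ifs with h0 h1 h1
  · omega
  · exact congrArg Sum.inl (Fin.ext (by simp [h0]))
  · rfl
  · rfl

theorem blackSrc_ne_inl (i j : Fin (n + 2)) : blackSrc n i ≠ Sum.inl j := by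
  unfold blackSrc
  split_ifs <;> exact Sum.inr_ne_inl

theorem blackTgt_ne_inl (i j : Fin (n + 2)) : blackTgt n i ≠ Sum.inl j := by
  unfold blackTgt
  split_ifs <;> exact Sum.inr_ne_inl

theorem orthonormal_adaptedFrame : Orthonormal ℂ (adaptedFrame n) := by
  let cols : (Fin (n + 2) ⊕ Fin (n + 2)) ⊕ Fin (n + 2) ⊕ Fin (n + 2) → ColIdx n :=
    Sum.elim (Sum.elim Sum.inl (Sum.inr ∘ Sum.inl))
      (Sum.elim (Sum.inr ∘ Sum.inr ∘ Sum.inr) (Sum.inr ∘ Sum.inr ∘ Sum.inl))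
  have hcols : Function.Injective cols := by
    rintro ((_ | _) | (_ | _)) ((_ | _) | (_ | _)) h <;> simp_all [cols]
  have hc : 2 * ‖(((√2)⁻¹ : ℝ) : ℂ)‖ ^ 2 = 1 := by
    simp
  have hends := orthonormal_sumElim_add_sub (EuclideanSpace.orthonormal_single.comp cols hcols) hc
  rw [adaptedFrame, ← Function.comp_id (fun c => EuclideanSpace.single _ _), ← Sum.elim_comp_map]
  exact hends.comp _ (Sum.map_injective.2 ⟨Function.injective_id, redEnd_injective n⟩)

/-- The coefficient of `|e_{z_i}⟩` in the Type I vector with index `i`. -/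
def typeICoeff (α : ℝ) (i : Fin (n + 2)) : ℝ :=
  if i = 0 then -(√2 / α) else √2 / α

theorem typeICoeff_ne_zero {α : ℝ} (hα : α ≠ 0) (i : Fin (n + 2)) :
    typeICoeff n α i ≠ 0 := by
  unfold typeICoeff
  split_ifs <;> simp [hα]

theorem typeI_eq_adaptedFrame (α γ : ℝ) (i : Fin (n + 2)) :
    typeI n α γ i = (typeICoeff n α i : ℂ) • adaptedFrame n (Sum.inl (Sum.inl i)) +
      ((γ⁻¹ : ℝ) : ℂ) • adaptedFrame n (Sum.inr (Sum.inl i)) := by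
  by_cases hi : i = 0 <;> simp [typeI, typeICoeff, adaptedFrame, redEnd, hi]

theorem typeII_eq_adaptedFrame (β γ : ℝ) (i : Fin (n + 2)) :
    typeII n β γ i = ((√2 / β : ℝ) : ℂ) • adaptedFrame n (Sum.inl (Sum.inr i)) +
      ((γ⁻¹ : ℝ) : ℂ) •
        (adaptedFrame n (Sum.inr (blackTgt n i)) - adaptedFrame n (Sum.inr (blackSrc n i))) := by
  simp only [typeII, adaptedFrame_inl_inr, adaptedFrame_inr, redEnd_blackSrc, redEnd_blackTgt,
    smul_sub, add_sub]
  split_ifs with h0 h1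
  · omega
  · obtain rfl : i = 0 := Fin.ext h0
    exact sub_add_eq_add_sub _ _ _
  all_goals exact sub_add_eq_add_sub _ _ _

theorem inner_typeI_typeI (α γ : ℝ) {i j : Fin (n + 2)} (hij : i ≠ j) :
    ⟪typeI n α γ i, typeI n α γ j⟫_ℂ = 0 := by
  simp [typeI_eq_adaptedFrame, orthonormal_iff_ite.1 (orthonormal_adaptedFrame n), hij]

theorem inner_typeI_typeII (α β γ : ℝ) (i j : Fin (n + 2)) :
    ⟪typeI n α γ i, typeII n β γ j⟫_ℂ = 0 := by
  simp [typeI_eq_adaptedFrame, typeII_eq_adaptedFrame,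
    orthonormal_iff_ite.1 (orthonormal_adaptedFrame n), (blackSrc_ne_inl n j i).symm,
    (blackTgt_ne_inl n j i).symm]

theorem linearIndependent_typeI_typeII {α β : ℝ} (γ : ℝ) (hα : α ≠ 0) (hβ : β ≠ 0) :
    LinearIndependent ℂ (Sum.elim (typeI n α γ) (typeII n β γ)) := by
  let a : Fin (n + 2) ⊕ Fin (n + 2) → ℂ :=
    Sum.elim (fun i => (typeICoeff n α i : ℂ)) (fun _ => ((√2 / β : ℝ) : ℂ))
  let y : Fin (n + 2) ⊕ Fin (n + 2) → EuclideanSpace ℂ (ColIdx n) := Sum.elim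
    (fun i => ((γ⁻¹ : ℝ) : ℂ) • adaptedFrame n (Sum.inr (Sum.inl i)))
    (fun i => ((γ⁻¹ : ℝ) : ℂ) •
      (adaptedFrame n (Sum.inr (blackTgt n i)) - adaptedFrame n (Sum.inr (blackSrc n i))))
  have heq : Sum.elim (typeI n α γ) (typeII n β γ) =
      fun c => a c • (adaptedFrame n ∘ Sum.inl) c + y c := by
    ext1 (i | i)
    · exact typeI_eq_adaptedFrame n α γ i
    · exact typeII_eq_adaptedFrame n β γ i
  have ha : ∀ c, a c ≠ 0 := by
    rintro (i | _)
    · exact Complex.ofReal_ne_zero.2 (typeICoeff_ne_zero n hα i)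
    · exact Complex.ofReal_ne_zero.2 (div_ne_zero (Real.sqrt_ne_zero'.2 two_pos) hβ)
  have hmem (u : GraphV n) :
      adaptedFrame n (Sum.inr u) ∈ Submodule.span ℂ (Set.range (adaptedFrame n ∘ Sum.inr)) :=
    Submodule.subset_span ⟨u, rfl⟩
  have hy : ∀ c, y c ∈ Submodule.span ℂ (Set.range (adaptedFrame n ∘ Sum.inr)) := by
    rintro (i | i)
    · exact Submodule.smul_mem _ _ (hmem _)
    · exact Submodule.smul_mem _ _ (Submodule.sub_mem _ (hmem _) (hmem _))
  have hframe : LinearIndependent ℂ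
      (Sum.elim (adaptedFrame n ∘ Sum.inl) (adaptedFrame n ∘ Sum.inr)) := by
    rw [Sum.elim_comp_inl_inr]
    exact (orthonormal_adaptedFrame n).linearIndependent
  rw [heq]
  exact linearIndependent_smul_add_of_mem_span hframe ha hy

theorem Mt_single (α β γ : ℝ) (c : ColIdx n) :
    Mt n α β γ (EuclideanSpace.single c 1) = col n α β γ c := by
  have hconstr := (PiLp.basisFun 2 ℂ (ColIdx n)).constr_basis ℂ (col n α β γ) c
  rwa [PiLp.basisFun_apply] at hconstr

theorem Mt_rplus (α β γ : ℝ) (i : Fin (n + 2)) :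
    Mt n α β γ (rplus n i) = ((√2 * γ : ℝ) : ℂ) • EuclideanSpace.single (redSrc n i) 1 := by
  rw [rplus, map_smul, map_add, Mt_single, Mt_single, col, col, ← smul_add, add_add_sub_cancel,
    ← two_smul ℂ, smul_smul, smul_smul, mul_right_comm, ofReal_inv_sqrt_two_mul_two,
    ← Complex.ofReal_mul]

theorem Mt_rminus (α β γ : ℝ) (i : Fin (n + 2)) :
    Mt n α β γ (rminus n i) = ((√2 * γ : ℝ) : ℂ) • EuclideanSpace.single (redTgt n i) 1 := by
  rw [rminus, map_smul, map_sub, Mt_single, Mt_single, col, col, ← smul_sub, add_sub_sub_cancel,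
    ← two_smul ℂ, smul_smul, smul_smul, mul_right_comm, ofReal_inv_sqrt_two_mul_two,
    ← Complex.ofReal_mul]

theorem Mt_elim_rplus_rminus (α β γ : ℝ) (x : Fin (n + 2) ⊕ Fin (n + 2)) :
    Mt n α β γ (Sum.elim (rplus n) (rminus n) x) =
      ((√2 * γ : ℝ) : ℂ) • EuclideanSpace.single (Sum.elim (redSrc n) (redTgt n) x) 1 := by
  rcases x with i | i
  · exact Mt_rplus n α β γ i
  · exact Mt_rminus n α β γ i

theorem Mt_adaptedFrame_inr (α β γ : ℝ) (u : GraphV n) :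
    Mt n α β γ (adaptedFrame n (Sum.inr u)) = ((√2 * γ : ℝ) : ℂ) • EuclideanSpace.single u 1 := by
  rw [adaptedFrame_inr, Mt_elim_rplus_rminus, elim_redSrc_redTgt_redEnd]

theorem Mt_surjective (α β : ℝ) {γ : ℝ} (hγ : γ ≠ 0) :
    Function.Surjective (Mt n α β γ) := by
  refine surjective_of_apply_eq_smul_basis (PiLp.basisFun 2 ℂ (GraphV n))
    (v := adaptedFrame n ∘ Sum.inr) (c := ((√2 * γ : ℝ) : ℂ)) (by simpa using hγ) fun u => ?_
  rw [PiLp.basisFun_apply]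
  exact Mt_adaptedFrame_inr n α β γ u

theorem finrank_ker_Mt (α β : ℝ) {γ : ℝ} (hγ : γ ≠ 0) :
    Module.finrank ℂ (LinearMap.ker (Mt n α β γ)) = 2 * n + 4 := by
  have hrank := (Mt n α β γ).finrank_range_add_finrank_ker
  rw [LinearMap.range_eq_top.2 (Mt_surjective n α β hγ), finrank_top, finrank_euclideanSpace,
    finrank_euclideanSpace] at hrank
  simp only [Fintype.card_sum, Fintype.card_fin, Fintype.card_bool] at hrank
  omega

theorem typeICoeff_smul_col {α : ℝ} (β γ : ℝ) (hα : α ≠ 0) (i : Fin (n + 2)) :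
    (typeICoeff n α i : ℂ) • col n α β γ (Sum.inl i) =
      -((√2 : ℝ) : ℂ) • EuclideanSpace.single (Sum.inl i) 1 := by
  have hα' : (α : ℂ) ≠ 0 := Complex.ofReal_ne_zero.2 hα
  rw [col, smul_smul]
  congr 1
  unfold typeICoeff
  split_ifs <;> push_cast <;> field_simp

theorem inv_smul_Mt_adaptedFrame_inr (α β : ℝ) {γ : ℝ} (hγ : γ ≠ 0) (u : GraphV n) :
    ((γ⁻¹ : ℝ) : ℂ) • Mt n α β γ (adaptedFrame n (Sum.inr u)) =
      ((√2 : ℝ) : ℂ) • EuclideanSpace.single u 1 := by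
  rw [Mt_adaptedFrame_inr, smul_smul, ← Complex.ofReal_mul, mul_left_comm,
    inv_mul_cancel₀ hγ, mul_one]

theorem Mt_typeI {α γ : ℝ} (β : ℝ) (hα : α ≠ 0) (hγ : γ ≠ 0) (i : Fin (n + 2)) :
    Mt n α β γ (typeI n α γ i) = 0 := by
  rw [typeI_eq_adaptedFrame, map_add, map_smul, map_smul, inv_smul_Mt_adaptedFrame_inr n α β hγ,
    adaptedFrame_inl_inl, Mt_single, typeICoeff_smul_col n β γ hα, ← add_smul, neg_add_cancel,
    zero_smul]

theorem Mt_typeII (α : ℝ) {β γ : ℝ} (hβ : β ≠ 0) (hγ : γ ≠ 0) (i : Fin (n + 2)) :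
    Mt n α β γ (typeII n β γ i) = 0 := by
  rw [typeII_eq_adaptedFrame, map_add, map_smul, map_smul, map_sub, smul_sub,
    inv_smul_Mt_adaptedFrame_inr n α β hγ, inv_smul_Mt_adaptedFrame_inr n α β hγ,
    adaptedFrame_inl_inr, Mt_single, col, smul_smul, ← Complex.ofReal_mul, div_mul_cancel₀ _ hβ,
    ← smul_sub, ← smul_add, sub_add_sub_cancel, sub_self, smul_zero]

theorem span_typeI_typeII {α β γ : ℝ} (hα : α ≠ 0) (hβ : β ≠ 0) (hγ : γ ≠ 0) :
    Submodule.span ℂ (Set.range (Sum.elim (typeI n α γ) (typeII n β γ))) =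
      LinearMap.ker (Mt n α β γ) := by
  refine Submodule.eq_of_le_of_finrank_eq (Submodule.span_le.2 ?_) ?_
  · rintro _ ⟨i | i, rfl⟩
    · exact Mt_typeI n β hα hγ i
    · exact Mt_typeII n α hβ hγ i
  · rw [finrank_span_eq_card (linearIndependent_typeI_typeII n γ hα hβ), finrank_ker_Mt n α β hγ]
    simp only [Fintype.card_sum, Fintype.card_fin]
    omega

end DecisionGraph

/-- `M̃` is surjective, so `dim ker M̃ = 2n + 4`; the Type I vectors are pairwise orthogonal
and orthogonal to every Type II vector; the Type II vectors are linearly independent; and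
Type I and Type II vectors together form a basis of `ker M̃`. -/
theorem typeI_typeII_basis_of_kernel (n : ℕ) (hn : 1 ≤ n) (α β γ : ℝ)
    (hα : 0 < α) (hβ : 0 < β) (hγ : 0 < γ) :
    Function.Surjective (Mt n α β γ) ∧
    Module.finrank ℂ (LinearMap.ker (Mt n α β γ)) = 2 * n + 4 ∧
    (∀ i j : Fin (n + 2), i ≠ j → ⟪typeI n α γ i, typeI n α γ j⟫_ℂ = 0) ∧
    (∀ i j : Fin (n + 2), ⟪typeI n α γ i, typeII n β γ j⟫_ℂ = 0) ∧
    LinearIndependent ℂ (typeII n β γ) ∧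
    LinearIndependent ℂ (Sum.elim (typeI n α γ) (typeII n β γ)) ∧
    Submodule.span ℂ (Set.range (Sum.elim (typeI n α γ) (typeII n β γ))) =
      LinearMap.ker (Mt n α β γ) := by
  have hli := linearIndependent_typeI_typeII n γ hα.ne' hβ.ne'
  exact ⟨Mt_surjective n α β hγ.ne', finrank_ker_Mt n α β hγ.ne',
    fun _ _ hij => inner_typeI_typeI n α γ hij, inner_typeI_typeII n α β γ,
    hli.comp Sum.inr Sum.inr_injective, hli, span_typeI_typeII n hα.ne' hβ.ne' hγ.ne'⟩

end
end

section
/- The Type I vectors together with the Type II vectors of all black cycles form a basis of the kernel of M̃. -/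
noncomputable section

namespace DecisionGraph

variable {V : Type*} [Fintype V] [DecidableEq V]

/-! ## The decision graph `𝒯̃`

The binary decision tree `𝒯` on vertex set `V` is encoded by `root`, a parent function
(`parent root = root` by convention), the color `pcolor v` of the parent edge of each non-root
vertex (`true` = black, `false` = red), and a depth function.  The vertex set of `𝒯̃` is
`V ⊕ V`, where `Sum.inl v` is the vertex `v` of `𝒯` and `Sum.inr v` is its hatted copy `v̂`
(for `v ∈ V_in^r`) resp. `ẑ` (for `v ∈ V_leaf^b`).

`SLeaf`, `SInR`, `SLeafB`, `SE1`, `SE1r`, `SE1b` are the sets of leaves of `𝒯`, of non-leaf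
vertices with red parent edge, of leaves with black parent edge, of family-(1) edge indices,
and of the red resp. black ones among the latter. -/

/-- Column indices of `M̃`: the root column `e_{z₀}`, a column `e_z` for each leaf `z` of `𝒯`,
a column for each edge of `𝒯̃` (families (1)–(6)) and a column for each pseudo-edge
(parallel to the red edges of families (1), (3), (4)). -/
abbrev DIdx (SLeaf SE1 SInR SLeafB SE1r : Finset V) : Type _ :=
  (Unit ⊕ {z : V // z ∈ SLeaf}) ⊕
  ({w : V // w ∈ SE1} ⊕ {v : V // v ∈ SInR} ⊕ {v : V // v ∈ SInR} ⊕
    {z : V // z ∈ SLeafB} ⊕ {z : V // z ∈ SLeafB} ⊕ {v : V // v ∈ SInR}) ⊕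
  ({w : V // w ∈ SE1r} ⊕ {v : V // v ∈ SInR} ⊕ {z : V // z ∈ SLeafB})

/-- The columns of `M̃`:  `α|z₀⟩` for the root, `−α|z⟩` for leaves, `β(|u⟩ − |w⟩)` for black
edges `(u, w)`, `γ(|u⟩ − |w⟩)` for red edges and `γ(|u⟩ + |w⟩)` for pseudo-edges.
Family (1): `(parent w, w)` with the color inherited from `𝒯`; family (2): `(v̂, v)` black;
family (3): `(parent v, v̂)` red; family (4): `(ẑ, z)` red; family (5): `(parent z, ẑ)` black;
family (6): `(ẑ_v, v̂)` black. -/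
def Mcol (root : V) (parent : V → V) (pcolor : V → Bool) (zfun : V → V)
    (SLeaf SE1 SInR SLeafB SE1r : Finset V) (α β γ : ℝ) :
    DIdx SLeaf SE1 SInR SLeafB SE1r → EuclideanSpace ℂ (V ⊕ V)
  | Sum.inl (Sum.inl _) => (α : ℂ) • EuclideanSpace.single (Sum.inl root) 1
  | Sum.inl (Sum.inr z) => (-α : ℂ) • EuclideanSpace.single (Sum.inl z.1) 1
  | Sum.inr (Sum.inl (Sum.inl w)) =>
      ((if pcolor w.1 then β else γ : ℝ) : ℂ) •
        (EuclideanSpace.single (Sum.inl (parent w.1)) 1 -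
          EuclideanSpace.single (Sum.inl w.1) 1)
  | Sum.inr (Sum.inl (Sum.inr (Sum.inl v))) =>
      (β : ℂ) • (EuclideanSpace.single (Sum.inr v.1) 1 -
        EuclideanSpace.single (Sum.inl v.1) 1)
  | Sum.inr (Sum.inl (Sum.inr (Sum.inr (Sum.inl v)))) =>
      (γ : ℂ) • (EuclideanSpace.single (Sum.inl (parent v.1)) 1 -
        EuclideanSpace.single (Sum.inr v.1) 1)
  | Sum.inr (Sum.inl (Sum.inr (Sum.inr (Sum.inr (Sum.inl z))))) =>
      (γ : ℂ) • (EuclideanSpace.single (Sum.inr z.1) 1 -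
        EuclideanSpace.single (Sum.inl z.1) 1)
  | Sum.inr (Sum.inl (Sum.inr (Sum.inr (Sum.inr (Sum.inr (Sum.inl z)))))) =>
      (β : ℂ) • (EuclideanSpace.single (Sum.inl (parent z.1)) 1 -
        EuclideanSpace.single (Sum.inr z.1) 1)
  | Sum.inr (Sum.inl (Sum.inr (Sum.inr (Sum.inr (Sum.inr (Sum.inr v)))))) =>
      (β : ℂ) • (EuclideanSpace.single (Sum.inr (zfun v.1)) 1 -
        EuclideanSpace.single (Sum.inr v.1) 1)
  | Sum.inr (Sum.inr (Sum.inl w)) =>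
      (γ : ℂ) • (EuclideanSpace.single (Sum.inl (parent w.1)) 1 +
        EuclideanSpace.single (Sum.inl w.1) 1)
  | Sum.inr (Sum.inr (Sum.inr (Sum.inl v))) =>
      (γ : ℂ) • (EuclideanSpace.single (Sum.inl (parent v.1)) 1 +
        EuclideanSpace.single (Sum.inr v.1) 1)
  | Sum.inr (Sum.inr (Sum.inr (Sum.inr z))) =>
      (γ : ℂ) • (EuclideanSpace.single (Sum.inr z.1) 1 +
        EuclideanSpace.single (Sum.inl z.1) 1)

/-- The matrix `M̃` as a linear map. -/
def Mt (root : V) (parent : V → V) (pcolor : V → Bool) (zfun : V → V)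
    (SLeaf SE1 SInR SLeafB SE1r : Finset V) (α β γ : ℝ) :
    EuclideanSpace ℂ (DIdx SLeaf SE1 SInR SLeafB SE1r) →ₗ[ℂ] EuclideanSpace ℂ (V ⊕ V) :=
  (PiLp.basisFun 2 ℂ (DIdx SLeaf SE1 SInR SLeafB SE1r)).constr ℂ
    (Mcol root parent pcolor zfun SLeaf SE1 SInR SLeafB SE1r α β γ)

/-- The Type I vector `−(√2/α) e_{z₀} + (1/γ) e⁺_{(z₀, v̂₀)}` (described coordinatewise;
`e^± := (ē ± e)/√2`, so it has coordinate `1/(γ√2)` on both the family-(3) edge into `v̂₀`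
and its parallel pseudo-edge). -/
def typeIroot (v₀ : V) (SLeaf SE1 SInR SLeafB SE1r : Finset V) (α γ : ℝ) :
    EuclideanSpace ℂ (DIdx SLeaf SE1 SInR SLeafB SE1r) :=
  (EuclideanSpace.equiv (DIdx SLeaf SE1 SInR SLeafB SE1r) ℂ).symm fun d =>
    match d with
    | Sum.inl (Sum.inl _) => ((-(Real.sqrt 2 / α) : ℝ) : ℂ)
    | Sum.inr (Sum.inl (Sum.inr (Sum.inr (Sum.inl v)))) =>
        if v.1 = v₀ then (((γ * Real.sqrt 2)⁻¹ : ℝ) : ℂ) else 0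
    | Sum.inr (Sum.inr (Sum.inr (Sum.inl v))) =>
        if v.1 = v₀ then (((γ * Real.sqrt 2)⁻¹ : ℝ) : ℂ) else 0
    | _ => 0

/-- The Type I vector `(√2/α) e_z + (1/γ) e⁻_{p(z)}` of a leaf `z` of `𝒯`, where `p(z)` is
the unique red parent edge of `z` in `𝒯̃` (the family-(4) edge `(ẑ, z)` if `z ∈ V_leaf^b`,
and the family-(1) red edge `(parent z, z)` otherwise). -/
def typeIleaf (SLeaf SE1 SInR SLeafB SE1r : Finset V) (α γ : ℝ)
    (z : {z : V // z ∈ SLeaf}) :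
    EuclideanSpace ℂ (DIdx SLeaf SE1 SInR SLeafB SE1r) :=
  (EuclideanSpace.equiv (DIdx SLeaf SE1 SInR SLeafB SE1r) ℂ).symm fun d =>
    match d with
    | Sum.inl (Sum.inr z') =>
        if z'.1 = z.1 then ((Real.sqrt 2 / α : ℝ) : ℂ) else 0
    | Sum.inr (Sum.inl (Sum.inl w)) =>
        if w.1 = z.1 then (-(((γ * Real.sqrt 2)⁻¹ : ℝ)) : ℂ) else 0
    | Sum.inr (Sum.inl (Sum.inr (Sum.inr (Sum.inr (Sum.inl z'))))) =>
        if z'.1 = z.1 then (-(((γ * Real.sqrt 2)⁻¹ : ℝ)) : ℂ) else 0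
    | Sum.inr (Sum.inr (Sum.inl w)) =>
        if w.1 = z.1 then (((γ * Real.sqrt 2)⁻¹ : ℝ) : ℂ) else 0
    | Sum.inr (Sum.inr (Sum.inr (Sum.inr z'))) =>
        if z'.1 = z.1 then (((γ * Real.sqrt 2)⁻¹ : ℝ) : ℂ) else 0
    | _ => 0

/-- Index set of the Type II vectors: one for each black edge of `𝒯̃`, i.e. for each
family-(1) black edge, each family-(2) edge, each family-(5) edge and each family-(6) edge. -/
abbrev BIdx (SE1b SInR SLeafB : Finset V) : Type _ :=
  {w : V // w ∈ SE1b} ⊕ {v : V // v ∈ SInR} ⊕ {z : V // z ∈ SLeafB} ⊕ {v : V // v ∈ SInR}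

/-- The Type II vectors, one for each black edge of `𝒯̃` (described coordinatewise, with
`ρ(u)` the unique red edge of `𝒯̃` leaving a vertex `u` of `𝒯`, i.e. the parent edge of the
red child `rchild u` of `u`):
* family (2), `v ∈ V_in^r`: `(√2/β) e_{(v̂,v)} − (1/γ) e⁻_{(parent v, v̂)} + (1/γ) e⁺_{ρ(v)}`;
* family (1) black, edge `(parent w, w)`:
  `(√2/β) e_{(parent w, w)} − (1/γ) e⁺_{ρ(parent w)} + (1/γ) e⁺_{ρ(w)}`;
* family (5), `z ∈ V_leaf^b`:
  `(√2/β) e_{(parent z, ẑ)} − (1/γ) e⁺_{ρ(parent z)} + (1/γ) e⁺_{(ẑ, z)}`;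
* family (6), `v ∈ V_in^r`:
  `(√2/β) e_{(ẑ_v, v̂)} − (1/γ) e⁺_{(ẑ_v, z_v)} + (1/γ) e⁻_{(parent v, v̂)}`. -/
def typeII (root : V) (parent : V → V) (rchild zfun : V → V)
    (SLeaf SE1 SInR SLeafB SE1r SE1b : Finset V) (β γ : ℝ) :
    BIdx SE1b SInR SLeafB →
      EuclideanSpace ℂ (DIdx SLeaf SE1 SInR SLeafB SE1r)
  | Sum.inl w =>
      (EuclideanSpace.equiv (DIdx SLeaf SE1 SInR SLeafB SE1r) ℂ).symm fun d =>
        match d with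
        | Sum.inr (Sum.inl (Sum.inl w')) =>
            (if w'.1 = w.1 then ((Real.sqrt 2 / β : ℝ) : ℂ) else 0) +
            (if w'.1 = rchild (parent w.1) then (-(((γ * Real.sqrt 2)⁻¹ : ℝ)) : ℂ) else 0) +
            (if w'.1 = rchild w.1 then (((γ * Real.sqrt 2)⁻¹ : ℝ) : ℂ) else 0)
        | Sum.inr (Sum.inr (Sum.inl w')) =>
            (if w'.1 = rchild (parent w.1) then (-(((γ * Real.sqrt 2)⁻¹ : ℝ)) : ℂ) else 0) +
            (if w'.1 = rchild w.1 then (((γ * Real.sqrt 2)⁻¹ : ℝ) : ℂ) else 0)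
        | Sum.inr (Sum.inl (Sum.inr (Sum.inr (Sum.inl u)))) =>
            (if u.1 = rchild (parent w.1) then (-(((γ * Real.sqrt 2)⁻¹ : ℝ)) : ℂ) else 0) +
            (if u.1 = rchild w.1 then (((γ * Real.sqrt 2)⁻¹ : ℝ) : ℂ) else 0)
        | Sum.inr (Sum.inr (Sum.inr (Sum.inl u))) =>
            (if u.1 = rchild (parent w.1) then (-(((γ * Real.sqrt 2)⁻¹ : ℝ)) : ℂ) else 0) +
            (if u.1 = rchild w.1 then (((γ * Real.sqrt 2)⁻¹ : ℝ) : ℂ) else 0)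
        | _ => 0
  | Sum.inr (Sum.inl v) =>
      (EuclideanSpace.equiv (DIdx SLeaf SE1 SInR SLeafB SE1r) ℂ).symm fun d =>
        match d with
        | Sum.inr (Sum.inl (Sum.inr (Sum.inl u))) =>
            if u.1 = v.1 then ((Real.sqrt 2 / β : ℝ) : ℂ) else 0
        | Sum.inr (Sum.inl (Sum.inr (Sum.inr (Sum.inl u)))) =>
            (if u.1 = v.1 then (((γ * Real.sqrt 2)⁻¹ : ℝ) : ℂ) else 0) +
            (if u.1 = rchild v.1 then (((γ * Real.sqrt 2)⁻¹ : ℝ) : ℂ) else 0)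
        | Sum.inr (Sum.inr (Sum.inr (Sum.inl u))) =>
            (if u.1 = v.1 then (-(((γ * Real.sqrt 2)⁻¹ : ℝ)) : ℂ) else 0) +
            (if u.1 = rchild v.1 then (((γ * Real.sqrt 2)⁻¹ : ℝ) : ℂ) else 0)
        | Sum.inr (Sum.inl (Sum.inl w')) =>
            if w'.1 = rchild v.1 then (((γ * Real.sqrt 2)⁻¹ : ℝ) : ℂ) else 0
        | Sum.inr (Sum.inr (Sum.inl w')) =>
            if w'.1 = rchild v.1 then (((γ * Real.sqrt 2)⁻¹ : ℝ) : ℂ) else 0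
        | _ => 0
  | Sum.inr (Sum.inr (Sum.inl z)) =>
      (EuclideanSpace.equiv (DIdx SLeaf SE1 SInR SLeafB SE1r) ℂ).symm fun d =>
        match d with
        | Sum.inr (Sum.inl (Sum.inr (Sum.inr (Sum.inr (Sum.inr (Sum.inl z')))))) =>
            if z'.1 = z.1 then ((Real.sqrt 2 / β : ℝ) : ℂ) else 0
        | Sum.inr (Sum.inl (Sum.inl w')) =>
            if w'.1 = rchild (parent z.1) then (-(((γ * Real.sqrt 2)⁻¹ : ℝ)) : ℂ) else 0
        | Sum.inr (Sum.inr (Sum.inl w')) =>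
            if w'.1 = rchild (parent z.1) then (-(((γ * Real.sqrt 2)⁻¹ : ℝ)) : ℂ) else 0
        | Sum.inr (Sum.inl (Sum.inr (Sum.inr (Sum.inl u)))) =>
            if u.1 = rchild (parent z.1) then (-(((γ * Real.sqrt 2)⁻¹ : ℝ)) : ℂ) else 0
        | Sum.inr (Sum.inr (Sum.inr (Sum.inl u))) =>
            if u.1 = rchild (parent z.1) then (-(((γ * Real.sqrt 2)⁻¹ : ℝ)) : ℂ) else 0
        | Sum.inr (Sum.inl (Sum.inr (Sum.inr (Sum.inr (Sum.inl z'))))) =>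
            if z'.1 = z.1 then (((γ * Real.sqrt 2)⁻¹ : ℝ) : ℂ) else 0
        | Sum.inr (Sum.inr (Sum.inr (Sum.inr z'))) =>
            if z'.1 = z.1 then (((γ * Real.sqrt 2)⁻¹ : ℝ) : ℂ) else 0
        | _ => 0
  | Sum.inr (Sum.inr (Sum.inr v)) =>
      (EuclideanSpace.equiv (DIdx SLeaf SE1 SInR SLeafB SE1r) ℂ).symm fun d =>
        match d with
        | Sum.inr (Sum.inl (Sum.inr (Sum.inr (Sum.inr (Sum.inr (Sum.inr u)))))) =>
            if u.1 = v.1 then ((Real.sqrt 2 / β : ℝ) : ℂ) else 0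
        | Sum.inr (Sum.inl (Sum.inr (Sum.inr (Sum.inr (Sum.inl z'))))) =>
            if z'.1 = zfun v.1 then (-(((γ * Real.sqrt 2)⁻¹ : ℝ)) : ℂ) else 0
        | Sum.inr (Sum.inr (Sum.inr (Sum.inr z'))) =>
            if z'.1 = zfun v.1 then (-(((γ * Real.sqrt 2)⁻¹ : ℝ)) : ℂ) else 0
        | Sum.inr (Sum.inl (Sum.inr (Sum.inr (Sum.inl u)))) =>
            if u.1 = v.1 then (-(((γ * Real.sqrt 2)⁻¹ : ℝ)) : ℂ) else 0
        | Sum.inr (Sum.inr (Sum.inr (Sum.inl u))) =>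
            if u.1 = v.1 then (((γ * Real.sqrt 2)⁻¹ : ℝ) : ℂ) else 0
        | _ => 0

/-! The red edges of `𝒯̃` form a perfect matching of its vertices, and `M̃` sends
`e⁺ ↦ √2 γ |tail e⟩` and `e⁻ ↦ √2 γ |head e⟩` for each red edge `e`. So the red-edge and
pseudo-edge columns of `M̃` are linearly independent, and each remaining column (root, leaf or
black edge), whose image lies in the span of one or two vertices, is completed to a kernel vector
by the `e^±` of the red edges at these vertices. These completions are exactly the Type I and
Type II vectors; modulo the red part of the domain they are nonzero multiples of the remaining
standard basis vectors, which gives both independence and spanning. -/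

section LinearAlgebra

variable {R E F ι ν ρ : Type*} [Ring R] [AddCommGroup E] [Module R E] [AddCommGroup F] [Module R F]

theorem linearIndependent_of_sub_smul_mem_span {b : ι ⊕ ν → E} (hb : LinearIndependent R b)
    {f : ι → E} (c : ι → Rˣ)
    (hf : ∀ i, f i - c i • b (Sum.inl i) ∈ Submodule.span R (Set.range (b ∘ Sum.inr))) :
    LinearIndependent R f := by
  obtain ⟨hl, -, hdisj⟩ := linearIndependent_sum.1 hb
  set S := Submodule.span R (Set.range (b ∘ Sum.inr))
  have hmod : S.mkQ ∘ f = c • (S.mkQ ∘ b ∘ Sum.inl) := by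
    ext i
    simpa using (Submodule.Quotient.eq S).2 (hf i)
  refine LinearIndependent.of_comp S.mkQ ?_
  rw [hmod]
  exact (hl.map (by rwa [Submodule.ker_mkQ])).units_smul c

theorem span_eq_ker_of_sub_smul_mem_span {b : ι ⊕ ν → E} (hb : ⊤ ≤ Submodule.span R (Set.range b))
    {M : E →ₗ[R] F} (hM : LinearIndependent R (M ∘ b ∘ Sum.inr)) {f : ι → E} (c : ι → Rˣ)
    (hf : ∀ i, f i - c i • b (Sum.inl i) ∈ Submodule.span R (Set.range (b ∘ Sum.inr)))
    (hker : ∀ i, f i ∈ LinearMap.ker M) :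
    Submodule.span R (Set.range f) = LinearMap.ker M := by
  set S := Submodule.span R (Set.range (b ∘ Sum.inr))
  have hle : Submodule.span R (Set.range f) ≤ LinearMap.ker M :=
    Submodule.span_le.2 (Set.range_subset_iff.2 hker)
  have hdisj : LinearMap.ker M ⊓ S ≤ ⊥ :=
    (Submodule.range_ker_disjoint hM).symm.le_bot
  have hsup : Submodule.span R (Set.range b) ≤ Submodule.span R (Set.range f) ⊔ S := by
    rw [Submodule.span_le, Set.range_subset_iff]
    rintro (i | j)
    · have hfi : f i ∈ Submodule.span R (Set.range f) := Submodule.subset_span ⟨i, rfl⟩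
      have hcb : c i • b (Sum.inl i) ∈ Submodule.span R (Set.range f) ⊔ S := by
        rw [← sub_sub_self (f i) (c i • b (Sum.inl i))]
        exact sub_mem (Submodule.mem_sup_left hfi) (Submodule.mem_sup_right (hf i))
      exact (Submodule.smul_mem_iff_of_isUnit _ (c i).isUnit).1 hcb
    · exact Submodule.mem_sup_right (Submodule.subset_span ⟨j, rfl⟩)
  exact eq_of_le_of_inf_le_of_sup_le hle (hdisj.trans bot_le) (le_top.trans (hb.trans hsup))

theorem linearIndependent_sub_add [Finite ρ] (h2 : IsUnit (2 : R)) {u w : ρ → E}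
    (h : LinearIndependent R (Sum.elim u w)) :
    LinearIndependent R (Sum.elim (u - w) (u + w)) := by
  have := Fintype.ofFinite ρ
  rw [Fintype.linearIndependent_iff] at h ⊢
  intro g hg
  have hzero := h (Sum.elim (fun r => g (Sum.inr r) + g (Sum.inl r))
      (fun r => g (Sum.inr r) - g (Sum.inl r))) <| by
    rw [← hg]
    simp only [Fintype.sum_sum_type, Sum.elim_inl, Sum.elim_inr, Pi.sub_apply, Pi.add_apply,
      add_smul, sub_smul, smul_add, smul_sub, Finset.sum_add_distrib, Finset.sum_sub_distrib]
    abel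
  have hsum (r : ρ) : g (Sum.inr r) + g (Sum.inl r) = 0 := hzero (Sum.inl r)
  have hdiff (r : ρ) : g (Sum.inr r) - g (Sum.inl r) = 0 := hzero (Sum.inr r)
  have hinr (r : ρ) : g (Sum.inr r) = 0 := by
    rw [← h2.mul_right_eq_zero, two_mul]
    simpa using congrArg₂ (· + ·) (hsum r) (hdiff r)
  rintro (r | r)
  · simpa [hinr r] using hsum r
  · exact hinr r

end LinearAlgebra

theorem sqrt_two_eq_inv_mul_two : (Real.sqrt 2 : ℂ) = (Real.sqrt 2 : ℂ)⁻¹ * 2 := by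
  rw [inv_mul_eq_div]
  exact_mod_cast congrArg Complex.ofReal Real.div_sqrt.symm

omit [Fintype V] [DecidableEq V] in
theorem eq_of_red_siblings {root : V} {parent : V → V} {pcolor : V → Bool} {v c c' : V}
    (hv : ∃ b r, pcolor b = true ∧ ∀ u, u ≠ root → parent u = v → (u = b ∨ u = r))
    (hc : c ≠ root ∧ parent c = v ∧ pcolor c = false)
    (hc' : c' ≠ root ∧ parent c' = v ∧ pcolor c' = false) : c = c' := by
  obtain ⟨b, r, hb, hbr⟩ := hv
  have eq_r : ∀ u, u ≠ root ∧ parent u = v ∧ pcolor u = false → u = r := by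
    rintro u ⟨hu, hup, huc⟩
    refine (hbr u hu hup).resolve_left ?_
    rintro rfl
    exact Bool.noConfusion (hb.symm.trans huc)
  rw [eq_r c hc, eq_r c' hc']

/-- The combinatorial input of the decision graph: a parent map with two-coloured parent edges in
which every internal vertex has exactly one red child, the child `v₀` of the root being its only
one. The parent map may have cycles, a vertex may have any number of black children, and `zfun`
may pick any black leaf; a binary decision tree is the intended case. -/
structure RedBranching (V : Type*) where
  root : V
  parent : V → V
  pcolor : V → Bool
  v₀ : V
  rchild : V → V
  zfun : V → V
  SIn : Finset V
  SLeaf : Finset V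
  SInR : Finset V
  SLeafB : Finset V
  SE1 : Finset V
  SE1r : Finset V
  SE1b : Finset V
  mem_SIn : ∀ v, v ∈ SIn ↔ ∃ u, u ≠ root ∧ parent u = v
  mem_SLeaf : ∀ v, v ∈ SLeaf ↔ v ∉ SIn
  mem_SInR : ∀ v, v ∈ SInR ↔ (v ≠ root ∧ v ∈ SIn ∧ pcolor v = false)
  mem_SLeafB : ∀ v, v ∈ SLeafB ↔ (v ≠ root ∧ v ∉ SIn ∧ pcolor v = true)
  mem_SE1 : ∀ w, w ∈ SE1 ↔ (w ≠ root ∧ w ∉ SInR ∧ w ∉ SLeafB)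
  mem_SE1r : ∀ w, w ∈ SE1r ↔ (w ∈ SE1 ∧ pcolor w = false)
  mem_SE1b : ∀ w, w ∈ SE1b ↔ (w ∈ SE1 ∧ pcolor w = true)
  v₀_mem_SInR : v₀ ∈ SInR
  parent_v₀ : parent v₀ = root
  eq_v₀_of_parent_eq_root : ∀ u, u ≠ root → parent u = root → u = v₀
  rchild_spec : ∀ v, v ∈ SIn → v ≠ root →
    rchild v ≠ root ∧ parent (rchild v) = v ∧ pcolor (rchild v) = false
  rchild_parent : ∀ c, c ≠ root → pcolor c = false → parent c ≠ root → rchild (parent c) = c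
  zfun_mem_SLeafB : ∀ v, v ∈ SInR → zfun v ∈ SLeafB

namespace RedBranching

section Combinatorics

omit [Fintype V] [DecidableEq V]

/-- A red child, i.e. a vertex below a red edge of the tree. -/
def IsRed (T : RedBranching V) (c : V) : Prop := c ≠ T.root ∧ T.pcolor c = false

/-- A vertex from which a red edge `ρ(u)` towards `rchild u` leaves. -/
def IsBranching (T : RedBranching V) (u : V) : Prop := u ∈ T.SIn ∧ u ≠ T.root

variable {T : RedBranching V} {c u v w z : V}

theorem parent_mem_SIn (hw : w ≠ T.root) : T.parent w ∈ T.SIn :=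
  (T.mem_SIn _).2 ⟨w, hw, rfl⟩

theorem root_mem_SIn : T.root ∈ T.SIn :=
  T.parent_v₀ ▸ parent_mem_SIn ((T.mem_SInR _).1 T.v₀_mem_SInR).1

theorem isRed_of_mem_SInR (hv : v ∈ T.SInR) : T.IsRed v :=
  ⟨((T.mem_SInR v).1 hv).1, ((T.mem_SInR v).1 hv).2.2⟩

theorem isRed_of_mem_SE1r (hw : w ∈ T.SE1r) : T.IsRed w :=
  ⟨((T.mem_SE1 w).1 ((T.mem_SE1r w).1 hw).1).1, ((T.mem_SE1r w).1 hw).2⟩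

theorem isBranching_of_mem_SInR (hv : v ∈ T.SInR) : T.IsBranching v :=
  ⟨((T.mem_SInR v).1 hv).2.1, ((T.mem_SInR v).1 hv).1⟩

theorem isRed_rchild (hu : T.IsBranching u) : T.IsRed (T.rchild u) :=
  ⟨(T.rchild_spec u hu.1 hu.2).1, (T.rchild_spec u hu.1 hu.2).2.2⟩

theorem isBranching_parent_of_black (hw : w ≠ T.root) (hc : T.pcolor w = true) :
    T.IsBranching (T.parent w) := by
  refine ⟨parent_mem_SIn hw, fun hp => ?_⟩
  rw [T.eq_v₀_of_parent_eq_root w hw hp, (isRed_of_mem_SInR T.v₀_mem_SInR).2] at hc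
  exact Bool.noConfusion hc

theorem isBranching_parent_of_mem_SE1b (hw : w ∈ T.SE1b) : T.IsBranching (T.parent w) :=
  isBranching_parent_of_black ((T.mem_SE1 w).1 ((T.mem_SE1b w).1 hw).1).1 ((T.mem_SE1b w).1 hw).2

theorem isBranching_parent_of_mem_SLeafB (hz : z ∈ T.SLeafB) : T.IsBranching (T.parent z) :=
  isBranching_parent_of_black ((T.mem_SLeafB z).1 hz).1 ((T.mem_SLeafB z).1 hz).2.2

theorem isBranching_of_mem_SE1b (hw : w ∈ T.SE1b) : T.IsBranching w := by
  obtain ⟨hE, hc⟩ := (T.mem_SE1b w).1 hw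
  obtain ⟨hroot, -, hB⟩ := (T.mem_SE1 w).1 hE
  exact ⟨by_contra fun hin => hB ((T.mem_SLeafB w).2 ⟨hroot, hin, hc⟩), hroot⟩

theorem eq_of_parent_eq {c' : V} (hc : T.IsRed c) (hc' : T.IsRed c')
    (h : T.parent c = T.parent c') : c = c' := by
  by_cases hp : T.parent c = T.root
  · rw [T.eq_v₀_of_parent_eq_root c hc.1 hp, T.eq_v₀_of_parent_eq_root c' hc'.1 (h ▸ hp)]
  · rw [← T.rchild_parent c hc.1 hc.2 hp, h, T.rchild_parent c' hc'.1 hc'.2 (h ▸ hp)]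

theorem mem_SE1r_iff : w ∈ T.SE1r ↔ T.IsRed w ∧ w ∉ T.SIn := by
  simp only [T.mem_SE1r, T.mem_SE1, T.mem_SInR, T.mem_SLeafB, IsRed]
  cases T.pcolor w <;> simp +contextual

theorem ne_of_mem_SE1b (hw : w ∈ T.SE1b) (hc : T.IsRed c) : w ≠ c := by
  rintro rfl
  exact Bool.noConfusion (((T.mem_SE1b w).1 hw).2.symm.trans hc.2)

theorem coe_ne_rchild (hu : T.IsBranching u) (w : {w // w ∈ T.SE1b}) : w.1 ≠ T.rchild u :=
  ne_of_mem_SE1b w.2 (isRed_rchild hu)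

theorem mem_SE1r_of_mem_SLeaf (hz : z ∈ T.SLeaf) (hB : z ∉ T.SLeafB) : z ∈ T.SE1r := by
  have hin : z ∉ T.SIn := (T.mem_SLeaf z).1 hz
  have hroot : z ≠ T.root := fun h => hin (h ▸ root_mem_SIn)
  have hc : T.pcolor z = false :=
    Bool.eq_false_iff.2 fun hc => hB ((T.mem_SLeafB z).2 ⟨hroot, hin, hc⟩)
  exact mem_SE1r_iff.2 ⟨⟨hroot, hc⟩, hin⟩

theorem notMem_SE1_of_mem_SInR (hv : v ∈ T.SInR) : v ∉ T.SE1 :=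
  fun h => ((T.mem_SE1 v).1 h).2.1 hv

theorem notMem_SE1r_of_mem_SInR (hv : v ∈ T.SInR) : v ∉ T.SE1r :=
  fun h => notMem_SE1_of_mem_SInR hv ((T.mem_SE1r v).1 h).1

theorem notMem_SE1_of_mem_SLeafB (hz : z ∈ T.SLeafB) : z ∉ T.SE1 :=
  fun h => ((T.mem_SE1 z).1 h).2.2 hz

theorem notMem_SE1r_of_mem_SLeafB (hz : z ∈ T.SLeafB) : z ∉ T.SE1r :=
  fun h => notMem_SE1_of_mem_SLeafB hz ((T.mem_SE1r z).1 h).1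

theorem notMem_SInR_of_mem_SLeafB (hz : z ∈ T.SLeafB) : z ∉ T.SInR :=
  fun h => ((T.mem_SLeafB z).1 hz).2.1 ((T.mem_SInR z).1 h).2.1

/-- Indices of the red edges of `𝒯̃`: the red edges of families (1), (3) and (4). -/
abbrev RedEdge (T : RedBranching V) : Type _ :=
  {w : V // w ∈ T.SE1r} ⊕ {v : V // v ∈ T.SInR} ⊕ {z : V // z ∈ T.SLeafB}

/-- The upper endpoint of a red edge of `𝒯̃`. -/
def tail (T : RedBranching V) : T.RedEdge → V ⊕ V
  | Sum.inl w => Sum.inl (T.parent w.1)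
  | Sum.inr (Sum.inl v) => Sum.inl (T.parent v.1)
  | Sum.inr (Sum.inr z) => Sum.inr z.1

/-- The lower endpoint of a red edge of `𝒯̃`. -/
def head (T : RedBranching V) : T.RedEdge → V ⊕ V
  | Sum.inl w => Sum.inl w.1
  | Sum.inr (Sum.inl v) => Sum.inr v.1
  | Sum.inr (Sum.inr z) => Sum.inl z.1

theorem tail_inr_inl (v : {v // v ∈ T.SInR}) :
    T.tail (Sum.inr (Sum.inl v)) = Sum.inl (T.parent v.1) := rfl

theorem tail_inr_inr (z : {z // z ∈ T.SLeafB}) : T.tail (Sum.inr (Sum.inr z)) = Sum.inr z.1 := rfl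

theorem head_inr_inl (v : {v // v ∈ T.SInR}) : T.head (Sum.inr (Sum.inl v)) = Sum.inr v.1 := rfl

theorem tail_injective (T : RedBranching V) : Function.Injective T.tail := by
  rintro (⟨a, ha⟩ | ⟨a, ha⟩ | ⟨a, ha⟩) (⟨b, hb⟩ | ⟨b, hb⟩ | ⟨b, hb⟩) h <;>
    simp only [tail, Sum.inl.injEq, Sum.inr.injEq, reduceCtorEq] at h
  · obtain rfl := eq_of_parent_eq (isRed_of_mem_SE1r ha) (isRed_of_mem_SE1r hb) h
    rfl
  · obtain rfl := eq_of_parent_eq (isRed_of_mem_SE1r ha) (isRed_of_mem_SInR hb) h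
    exact absurd ha (notMem_SE1r_of_mem_SInR hb)
  · obtain rfl := eq_of_parent_eq (isRed_of_mem_SInR ha) (isRed_of_mem_SE1r hb) h
    exact absurd hb (notMem_SE1r_of_mem_SInR ha)
  · obtain rfl := eq_of_parent_eq (isRed_of_mem_SInR ha) (isRed_of_mem_SInR hb) h
    rfl
  · subst h
    rfl

theorem head_injective (T : RedBranching V) : Function.Injective T.head := by
  rintro (⟨a, ha⟩ | ⟨a, ha⟩ | ⟨a, ha⟩) (⟨b, hb⟩ | ⟨b, hb⟩ | ⟨b, hb⟩) h <;>
    simp only [head, Sum.inl.injEq, Sum.inr.injEq, reduceCtorEq] at h <;> subst h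
  · rfl
  · exact absurd ha (notMem_SE1r_of_mem_SLeafB hb)
  · rfl
  · exact absurd hb (notMem_SE1r_of_mem_SLeafB ha)
  · rfl

theorem tail_ne_head (T : RedBranching V) (r s : T.RedEdge) : T.tail r ≠ T.head s := by
  rcases r with ⟨a, ha⟩ | ⟨a, ha⟩ | ⟨a, ha⟩ <;> rcases s with ⟨b, hb⟩ | ⟨b, hb⟩ | ⟨b, hb⟩ <;>
    intro h <;> simp only [tail, head, Sum.inl.injEq, Sum.inr.injEq, reduceCtorEq] at h <;> subst h
  · exact (mem_SE1r_iff.1 hb).2 (parent_mem_SIn (isRed_of_mem_SE1r ha).1)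
  · exact ((T.mem_SLeafB _).1 hb).2.1 (parent_mem_SIn (isRed_of_mem_SE1r ha).1)
  · exact (mem_SE1r_iff.1 hb).2 (parent_mem_SIn (isRed_of_mem_SInR ha).1)
  · exact ((T.mem_SLeafB _).1 hb).2.1 (parent_mem_SIn (isRed_of_mem_SInR ha).1)
  · exact notMem_SInR_of_mem_SLeafB ha hb

theorem endpoints_injective (T : RedBranching V) : Function.Injective (Sum.elim T.tail T.head) :=
  T.tail_injective.sumElim T.head_injective T.tail_ne_head

/-- The columns of `M̃` carrying no red edge: the root, the leaves and the black edges. They index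
the Type I and Type II vectors. -/
abbrev FreeCol (T : RedBranching V) : Type _ :=
  (Unit ⊕ {z : V // z ∈ T.SLeaf}) ⊕ BIdx T.SE1b T.SInR T.SLeafB

/-- The column indices of `M̃`. -/
abbrev Col (T : RedBranching V) : Type _ := DIdx T.SLeaf T.SE1 T.SInR T.SLeafB T.SE1r

/-- The column of a root, leaf or black-edge index. -/
def freeCol (T : RedBranching V) : T.FreeCol → T.Col
  | Sum.inl i => Sum.inl i
  | Sum.inr (Sum.inl w) => Sum.inr (Sum.inl (Sum.inl ⟨w.1, ((T.mem_SE1b w.1).1 w.2).1⟩))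
  | Sum.inr (Sum.inr (Sum.inl v)) => Sum.inr (Sum.inl (Sum.inr (Sum.inl v)))
  | Sum.inr (Sum.inr (Sum.inr (Sum.inl z))) =>
      Sum.inr (Sum.inl (Sum.inr (Sum.inr (Sum.inr (Sum.inr (Sum.inl z))))))
  | Sum.inr (Sum.inr (Sum.inr (Sum.inr v))) =>
      Sum.inr (Sum.inl (Sum.inr (Sum.inr (Sum.inr (Sum.inr (Sum.inr v))))))

/-- The column `e` of a red edge. -/
def edgeCol (T : RedBranching V) : T.RedEdge → T.Col
  | Sum.inl w => Sum.inr (Sum.inl (Sum.inl ⟨w.1, ((T.mem_SE1r w.1).1 w.2).1⟩))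
  | Sum.inr (Sum.inl v) => Sum.inr (Sum.inl (Sum.inr (Sum.inr (Sum.inl v))))
  | Sum.inr (Sum.inr z) => Sum.inr (Sum.inl (Sum.inr (Sum.inr (Sum.inr (Sum.inl z)))))

/-- The column `ē` of the pseudo-edge parallel to a red edge. -/
def pseudoCol (T : RedBranching V) (r : T.RedEdge) : T.Col := Sum.inr (Sum.inr r)

/-- The columns of `M̃` split into the free columns, the red edges and the pseudo-edges. -/
def colEquiv (T : RedBranching V) : T.FreeCol ⊕ (T.RedEdge ⊕ T.RedEdge) ≃ T.Col where
  toFun := Sum.elim T.freeCol (Sum.elim T.edgeCol T.pseudoCol)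
  invFun
    | Sum.inl i => Sum.inl (Sum.inl i)
    | Sum.inr (Sum.inl (Sum.inl w)) =>
        if h : T.pcolor w.1 = true then
          Sum.inl (Sum.inr (Sum.inl ⟨w.1, (T.mem_SE1b w.1).2 ⟨w.2, h⟩⟩))
        else Sum.inr (Sum.inl (Sum.inl ⟨w.1, (T.mem_SE1r w.1).2 ⟨w.2, Bool.eq_false_iff.2 h⟩⟩))
    | Sum.inr (Sum.inl (Sum.inr (Sum.inl v))) => Sum.inl (Sum.inr (Sum.inr (Sum.inl v)))
    | Sum.inr (Sum.inl (Sum.inr (Sum.inr (Sum.inl v)))) => Sum.inr (Sum.inl (Sum.inr (Sum.inl v)))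
    | Sum.inr (Sum.inl (Sum.inr (Sum.inr (Sum.inr (Sum.inl z))))) =>
        Sum.inr (Sum.inl (Sum.inr (Sum.inr z)))
    | Sum.inr (Sum.inl (Sum.inr (Sum.inr (Sum.inr (Sum.inr (Sum.inl z)))))) =>
        Sum.inl (Sum.inr (Sum.inr (Sum.inr (Sum.inl z))))
    | Sum.inr (Sum.inl (Sum.inr (Sum.inr (Sum.inr (Sum.inr (Sum.inr v)))))) =>
        Sum.inl (Sum.inr (Sum.inr (Sum.inr (Sum.inr v))))
    | Sum.inr (Sum.inr r) => Sum.inr (Sum.inr r)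
  left_inv := by
    rintro (((_ | z) | w | v | z | v) | (w | v | z) | r) <;>
      simp only [Sum.elim_inl, Sum.elim_inr, freeCol, edgeCol, pseudoCol]
    · simp [((T.mem_SE1b w.1).1 w.2).2]
    · simp [((T.mem_SE1r w.1).1 w.2).2]
  right_inv := by
    rintro ((_ | z) | (w | v | v | z | z | v) | r) <;> try rfl
    by_cases h : T.pcolor w.1 = true <;> simp [h, freeCol, edgeCol]

/-- The coefficient of a Type I or Type II vector at its free column. -/
def freeCoeff (T : RedBranching V) (α β : ℝ) : T.FreeCol → ℂ
  | Sum.inl (Sum.inl _) => -(Real.sqrt 2 / α)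
  | Sum.inl (Sum.inr _) => Real.sqrt 2 / α
  | Sum.inr _ => Real.sqrt 2 / β

theorem freeCoeff_ne_zero {T : RedBranching V} {α β : ℝ} (hα : α ≠ 0) (hβ : β ≠ 0) (i : T.FreeCol) :
    T.freeCoeff α β i ≠ 0 := by
  rcases i with (_ | _) | _ <;> simp [freeCoeff, hα, hβ]

end Combinatorics

section Edges

omit [Fintype V]

variable {T : RedBranching V} {c u z : V}

/-- The red edge of `𝒯̃` that replaces the red edge `(parent c, c)` of the tree. -/
def redInto (T : RedBranching V) (c : V) (hc : T.IsRed c) : T.RedEdge :=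
  if h : c ∈ T.SInR then Sum.inr (Sum.inl ⟨c, h⟩)
  else Sum.inl ⟨c, mem_SE1r_iff.2 ⟨hc, fun hin => h ((T.mem_SInR c).2 ⟨hc.1, hin, hc.2⟩)⟩⟩

/-- The red edge `ρ(u)` leaving `u`. -/
def redOut (T : RedBranching V) (u : V) (hu : T.IsBranching u) : T.RedEdge :=
  T.redInto (T.rchild u) (isRed_rchild hu)

/-- The red parent edge `p(z)` of a leaf. -/
def leafEdge (T : RedBranching V) (z : V) (hz : z ∈ T.SLeaf) : T.RedEdge :=
  if h : z ∈ T.SLeafB then Sum.inr (Sum.inr ⟨z, h⟩) else Sum.inl ⟨z, mem_SE1r_of_mem_SLeaf hz h⟩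

theorem tail_redOut (hu : T.IsBranching u) : T.tail (T.redOut u hu) = Sum.inl u := by
  have hp : T.parent (T.rchild u) = u := (T.rchild_spec u hu.1 hu.2).2.1
  rw [redOut, redInto]
  split_ifs <;> simp only [tail, hp]

theorem head_leafEdge (hz : z ∈ T.SLeaf) : T.head (T.leafEdge z hz) = Sum.inl z := by
  rw [leafEdge]
  split_ifs <;> rfl

theorem inl_eq_redInto_iff (hc : T.IsRed c) (w : {w // w ∈ T.SE1r}) :
    Sum.inl w = T.redInto c hc ↔ w.1 = c := by
  rw [redInto]
  split_ifs with h
  · exact iff_of_false not_false fun hw => notMem_SE1r_of_mem_SInR h (hw ▸ w.2)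
  · simp only [Sum.inl.injEq, Subtype.ext_iff]

theorem inr_inl_eq_redInto_iff (hc : T.IsRed c) (v : {v // v ∈ T.SInR}) :
    Sum.inr (Sum.inl v) = T.redInto c hc ↔ v.1 = c := by
  rw [redInto]
  split_ifs with h
  · simp only [Sum.inr.injEq, Sum.inl.injEq, Subtype.ext_iff]
  · exact iff_of_false not_false fun hv => h (hv ▸ v.2)

theorem inr_inr_ne_redInto (hc : T.IsRed c) (z : {z // z ∈ T.SLeafB}) :
    Sum.inr (Sum.inr z) ≠ T.redInto c hc := by
  rw [redInto]
  split_ifs <;> simp only [ne_eq, Sum.inr.injEq, reduceCtorEq, not_false_eq_true]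

theorem inl_eq_leafEdge_iff (hz : z ∈ T.SLeaf) (w : {w // w ∈ T.SE1r}) :
    Sum.inl w = T.leafEdge z hz ↔ w.1 = z := by
  rw [leafEdge]
  split_ifs with h
  · exact iff_of_false not_false fun hw => notMem_SE1r_of_mem_SLeafB h (hw ▸ w.2)
  · simp only [Sum.inl.injEq, Subtype.ext_iff]

theorem inr_inl_ne_leafEdge (hz : z ∈ T.SLeaf) (v : {v // v ∈ T.SInR}) :
    Sum.inr (Sum.inl v) ≠ T.leafEdge z hz := by
  rw [leafEdge]
  split_ifs <;> simp only [ne_eq, Sum.inr.injEq, reduceCtorEq, not_false_eq_true]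

theorem inr_inr_eq_leafEdge_iff (hz : z ∈ T.SLeaf) (z' : {z // z ∈ T.SLeafB}) :
    Sum.inr (Sum.inr z') = T.leafEdge z hz ↔ z'.1 = z := by
  rw [leafEdge]
  split_ifs with h
  · simp only [Sum.inr.injEq, Subtype.ext_iff]
  · exact iff_of_false not_false fun hz' => h (hz' ▸ z'.2)

end Edges

section Vectors

omit [Fintype V]

/-- The standard basis vector `|p⟩`. -/
abbrev ket {ι : Type*} [DecidableEq ι] (p : ι) : EuclideanSpace ℂ ι := EuclideanSpace.single p 1

variable {T : RedBranching V}

set_option synthInstance.maxSize 1024 in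
instance : DecidableEq T.Col := inferInstance

set_option synthInstance.maxSize 1024 in
instance : DecidableEq T.FreeCol := inferInstance

/-- The vector `e⁺ = (ē + e)/√2` of a red edge `e`. -/
def plusVec (T : RedBranching V) (r : T.RedEdge) : EuclideanSpace ℂ T.Col :=
  (Real.sqrt 2 : ℂ)⁻¹ • (ket (T.pseudoCol r) + ket (T.edgeCol r))

/-- The vector `e⁻ = (ē - e)/√2` of a red edge `e`. -/
def minusVec (T : RedBranching V) (r : T.RedEdge) : EuclideanSpace ℂ T.Col :=
  (Real.sqrt 2 : ℂ)⁻¹ • (ket (T.pseudoCol r) - ket (T.edgeCol r))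

theorem ket_colEquiv_apply (x y : T.FreeCol ⊕ (T.RedEdge ⊕ T.RedEdge)) :
    ket (T.colEquiv x) (T.colEquiv y) = if y = x then 1 else 0 := by
  simp only [PiLp.single_apply, T.colEquiv.apply_eq_iff_eq]

theorem ket_freeCol_apply (i : T.FreeCol) (x : T.FreeCol ⊕ (T.RedEdge ⊕ T.RedEdge)) :
    ket (T.freeCol i) (T.colEquiv x) = if x = Sum.inl i then 1 else 0 :=
  ket_colEquiv_apply (Sum.inl i) x

theorem plusVec_apply (r : T.RedEdge) (x : T.FreeCol ⊕ (T.RedEdge ⊕ T.RedEdge)) :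
    T.plusVec r (T.colEquiv x) = Sum.elim (fun _ => 0)
      (Sum.elim (fun s => if s = r then (Real.sqrt 2 : ℂ)⁻¹ else 0)
        (fun s => if s = r then (Real.sqrt 2 : ℂ)⁻¹ else 0)) x := by
  have hp := ket_colEquiv_apply (T := T) (Sum.inr (Sum.inr r)) x
  have he := ket_colEquiv_apply (T := T) (Sum.inr (Sum.inl r)) x
  rcases x with i | s | s <;> simp_all [plusVec, colEquiv]

theorem minusVec_apply (r : T.RedEdge) (x : T.FreeCol ⊕ (T.RedEdge ⊕ T.RedEdge)) :
    T.minusVec r (T.colEquiv x) = Sum.elim (fun _ => 0)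
      (Sum.elim (fun s => if s = r then -(Real.sqrt 2 : ℂ)⁻¹ else 0)
        (fun s => if s = r then (Real.sqrt 2 : ℂ)⁻¹ else 0)) x := by
  have hp := ket_colEquiv_apply (T := T) (Sum.inr (Sum.inr r)) x
  have he := ket_colEquiv_apply (T := T) (Sum.inr (Sum.inl r)) x
  rcases x with i | s | s <;> simp_all [minusVec, colEquiv, apply_ite]

theorem typeIroot_eq (α γ : ℝ) :
    typeIroot T.v₀ T.SLeaf T.SE1 T.SInR T.SLeafB T.SE1r α γ =
      (-(Real.sqrt 2 / α) : ℂ) • ket (T.freeCol (Sum.inl (Sum.inl ()))) +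
        (γ : ℂ)⁻¹ • T.plusVec (Sum.inr (Sum.inl ⟨T.v₀, T.v₀_mem_SInR⟩)) := by
  ext d
  obtain ⟨x, rfl⟩ := T.colEquiv.surjective d
  simp only [PiLp.add_apply, PiLp.smul_apply, ket_freeCol_apply, plusVec_apply]
  rcases x with ((_ | _) | _ | _ | _ | _) | (_ | _ | _) | _ | _ | _ <;>
    simp [typeIroot, colEquiv, freeCol, edgeCol, pseudoCol, mul_comm, Subtype.ext_iff]

theorem typeIleaf_eq (α γ : ℝ) (z : {z // z ∈ T.SLeaf}) :
    typeIleaf T.SLeaf T.SE1 T.SInR T.SLeafB T.SE1r α γ z =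
      (Real.sqrt 2 / α : ℂ) • ket (T.freeCol (Sum.inl (Sum.inr z))) +
        (γ : ℂ)⁻¹ • T.minusVec (T.leafEdge z.1 z.2) := by
  obtain ⟨z, hz⟩ := z
  have hne : ∀ w : {w // w ∈ T.SE1b}, w.1 ≠ z := by
    rintro ⟨w, hw⟩ rfl
    exact (T.mem_SLeaf w).1 hz (isBranching_of_mem_SE1b hw).1
  ext d
  obtain ⟨x, rfl⟩ := T.colEquiv.surjective d
  simp only [PiLp.add_apply, PiLp.smul_apply, ket_freeCol_apply, minusVec_apply]
  rcases x with ((_ | _) | _ | _ | _ | _) | (_ | _ | _) | _ | _ | _ <;>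
    simp [typeIleaf, colEquiv, freeCol, edgeCol, pseudoCol, mul_comm, Subtype.ext_iff, hne,
      inl_eq_leafEdge_iff, inr_inl_ne_leafEdge, inr_inr_eq_leafEdge_iff]

theorem typeII_family1_eq (β γ : ℝ) (w : {w // w ∈ T.SE1b}) :
    typeII T.root T.parent T.rchild T.zfun T.SLeaf T.SE1 T.SInR T.SLeafB T.SE1r T.SE1b β γ
        (Sum.inl w) =
      (Real.sqrt 2 / β : ℂ) • ket (T.freeCol (Sum.inr (Sum.inl w))) +
        (-(γ : ℂ)⁻¹) • T.plusVec (T.redOut (T.parent w.1) (isBranching_parent_of_mem_SE1b w.2)) +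
        (γ : ℂ)⁻¹ • T.plusVec (T.redOut w.1 (isBranching_of_mem_SE1b w.2)) := by
  obtain ⟨w, hw⟩ := w
  have hwr : ∀ d : {w // w ∈ T.SE1r}, d.1 ≠ w := fun d =>
    (ne_of_mem_SE1b hw (isRed_of_mem_SE1r d.2)).symm
  ext d
  obtain ⟨x, rfl⟩ := T.colEquiv.surjective d
  simp only [PiLp.add_apply, PiLp.smul_apply, ket_freeCol_apply, plusVec_apply]
  rcases x with ((_ | _) | _ | _ | _ | _) | (_ | _ | _) | _ | _ | _ <;>
    simp [typeII, colEquiv, freeCol, edgeCol, pseudoCol, mul_comm, Subtype.ext_iff, redOut, hwr,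
      inl_eq_redInto_iff, inr_inl_eq_redInto_iff, inr_inr_ne_redInto,
      coe_ne_rchild (isBranching_parent_of_mem_SE1b hw), coe_ne_rchild (isBranching_of_mem_SE1b hw)]

theorem typeII_family2_eq (β γ : ℝ) (v : {v // v ∈ T.SInR}) :
    typeII T.root T.parent T.rchild T.zfun T.SLeaf T.SE1 T.SInR T.SLeafB T.SE1r T.SE1b β γ
        (Sum.inr (Sum.inl v)) =
      (Real.sqrt 2 / β : ℂ) • ket (T.freeCol (Sum.inr (Sum.inr (Sum.inl v)))) +
        (-(γ : ℂ)⁻¹) • T.minusVec (Sum.inr (Sum.inl v)) +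
        (γ : ℂ)⁻¹ • T.plusVec (T.redOut v.1 (isBranching_of_mem_SInR v.2)) := by
  obtain ⟨v, hv⟩ := v
  ext d
  obtain ⟨x, rfl⟩ := T.colEquiv.surjective d
  simp only [PiLp.add_apply, PiLp.smul_apply, ket_freeCol_apply, plusVec_apply, minusVec_apply]
  rcases x with ((_ | _) | _ | _ | _ | _) | (_ | _ | _) | _ | _ | _ <;>
    simp [typeII, colEquiv, freeCol, edgeCol, pseudoCol, mul_comm, Subtype.ext_iff, redOut,
      inl_eq_redInto_iff, inr_inl_eq_redInto_iff, inr_inr_ne_redInto,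
      coe_ne_rchild (isBranching_of_mem_SInR hv)]

theorem typeII_family5_eq (β γ : ℝ) (z : {z // z ∈ T.SLeafB}) :
    typeII T.root T.parent T.rchild T.zfun T.SLeaf T.SE1 T.SInR T.SLeafB T.SE1r T.SE1b β γ
        (Sum.inr (Sum.inr (Sum.inl z))) =
      (Real.sqrt 2 / β : ℂ) • ket (T.freeCol (Sum.inr (Sum.inr (Sum.inr (Sum.inl z))))) +
        (-(γ : ℂ)⁻¹) • T.plusVec (T.redOut (T.parent z.1) (isBranching_parent_of_mem_SLeafB z.2)) +
        (γ : ℂ)⁻¹ • T.plusVec (Sum.inr (Sum.inr z)) := by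
  obtain ⟨z, hz⟩ := z
  ext d
  obtain ⟨x, rfl⟩ := T.colEquiv.surjective d
  simp only [PiLp.add_apply, PiLp.smul_apply, ket_freeCol_apply, plusVec_apply]
  rcases x with ((_ | _) | _ | _ | _ | _) | (_ | _ | _) | _ | _ | _ <;>
    simp [typeII, colEquiv, freeCol, edgeCol, pseudoCol, mul_comm, Subtype.ext_iff, redOut,
      inl_eq_redInto_iff, inr_inl_eq_redInto_iff, inr_inr_ne_redInto,
      coe_ne_rchild (isBranching_parent_of_mem_SLeafB hz)]

theorem typeII_family6_eq (β γ : ℝ) (v : {v // v ∈ T.SInR}) :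
    typeII T.root T.parent T.rchild T.zfun T.SLeaf T.SE1 T.SInR T.SLeafB T.SE1r T.SE1b β γ
        (Sum.inr (Sum.inr (Sum.inr v))) =
      (Real.sqrt 2 / β : ℂ) • ket (T.freeCol (Sum.inr (Sum.inr (Sum.inr (Sum.inr v))))) +
        (-(γ : ℂ)⁻¹) • T.plusVec (Sum.inr (Sum.inr ⟨T.zfun v.1, T.zfun_mem_SLeafB v.1 v.2⟩)) +
        (γ : ℂ)⁻¹ • T.minusVec (Sum.inr (Sum.inl v)) := by
  obtain ⟨v, hv⟩ := v
  ext d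
  obtain ⟨x, rfl⟩ := T.colEquiv.surjective d
  simp only [PiLp.add_apply, PiLp.smul_apply, ket_freeCol_apply, plusVec_apply, minusVec_apply]
  rcases x with ((_ | _) | _ | _ | _ | _) | (_ | _ | _) | _ | _ | _ <;>
    simp [typeII, colEquiv, freeCol, edgeCol, pseudoCol, mul_comm, Subtype.ext_iff]

/-- The Type I and Type II vectors. -/
def kernelVec (T : RedBranching V) (α β γ : ℝ) : T.FreeCol → EuclideanSpace ℂ T.Col :=
  Sum.elim
    (Sum.elim (fun _ : Unit => typeIroot T.v₀ T.SLeaf T.SE1 T.SInR T.SLeafB T.SE1r α γ)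
      (typeIleaf T.SLeaf T.SE1 T.SInR T.SLeafB T.SE1r α γ))
    (typeII T.root T.parent T.rchild T.zfun T.SLeaf T.SE1 T.SInR T.SLeafB T.SE1r T.SE1b β γ)

end Vectors

section Basis

variable {T : RedBranching V}

/-- The standard basis of the domain of `M̃`, with the red and pseudo-edge columns last. -/
def colBasis (T : RedBranching V) :
    Module.Basis (T.FreeCol ⊕ (T.RedEdge ⊕ T.RedEdge)) ℂ (EuclideanSpace ℂ T.Col) :=
  (PiLp.basisFun 2 ℂ T.Col).reindex T.colEquiv.symm

theorem colBasis_apply (x : T.FreeCol ⊕ (T.RedEdge ⊕ T.RedEdge)) :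
    T.colBasis x = ket (T.colEquiv x) := by
  rw [colBasis, Module.Basis.reindex_apply, Equiv.symm_symm, PiLp.basisFun_apply]

/-- The span of the red-edge and pseudo-edge columns of the domain of `M̃`. -/
def redSpan (T : RedBranching V) : Submodule ℂ (EuclideanSpace ℂ T.Col) :=
  Submodule.span ℂ (Set.range (T.colBasis ∘ Sum.inr))

theorem ket_edgeCol_mem_redSpan (r : T.RedEdge) : ket (T.edgeCol r) ∈ T.redSpan :=
  Submodule.subset_span ⟨Sum.inl r, colBasis_apply _⟩

theorem ket_pseudoCol_mem_redSpan (r : T.RedEdge) : ket (T.pseudoCol r) ∈ T.redSpan :=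
  Submodule.subset_span ⟨Sum.inr r, colBasis_apply _⟩

theorem plusVec_mem_redSpan (r : T.RedEdge) : T.plusVec r ∈ T.redSpan :=
  Submodule.smul_mem _ _ (add_mem (ket_pseudoCol_mem_redSpan r) (ket_edgeCol_mem_redSpan r))

theorem minusVec_mem_redSpan (r : T.RedEdge) : T.minusVec r ∈ T.redSpan :=
  Submodule.smul_mem _ _ (sub_mem (ket_pseudoCol_mem_redSpan r) (ket_edgeCol_mem_redSpan r))

theorem kernelVec_sub_mem_redSpan (α β γ : ℝ) (i : T.FreeCol) :
    T.kernelVec α β γ i - T.freeCoeff α β i • T.colBasis (Sum.inl i) ∈ T.redSpan := by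
  have hcol : T.colBasis (Sum.inl i) = ket (T.freeCol i) := colBasis_apply _
  rw [hcol]
  rcases i with (_ | z) | w | v | z | v <;>
    simp only [kernelVec, freeCoeff, Sum.elim_inl, Sum.elim_inr, typeIroot_eq, typeIleaf_eq,
      typeII_family1_eq, typeII_family2_eq, typeII_family5_eq, typeII_family6_eq,
      add_assoc, add_sub_cancel_left]
  · exact Submodule.smul_mem _ _ (plusVec_mem_redSpan _)
  · exact Submodule.smul_mem _ _ (minusVec_mem_redSpan _)
  · exact add_mem (Submodule.smul_mem _ _ (plusVec_mem_redSpan _))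
      (Submodule.smul_mem _ _ (plusVec_mem_redSpan _))
  · exact add_mem (Submodule.smul_mem _ _ (minusVec_mem_redSpan _))
      (Submodule.smul_mem _ _ (plusVec_mem_redSpan _))
  · exact add_mem (Submodule.smul_mem _ _ (plusVec_mem_redSpan _))
      (Submodule.smul_mem _ _ (plusVec_mem_redSpan _))
  · exact add_mem (Submodule.smul_mem _ _ (plusVec_mem_redSpan _))
      (Submodule.smul_mem _ _ (minusVec_mem_redSpan _))

end Basis

section Kernel

variable (T : RedBranching V) (α β γ : ℝ)

/-- The map `M̃` of the decision graph. -/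
abbrev decisionMap : EuclideanSpace ℂ T.Col →ₗ[ℂ] EuclideanSpace ℂ (V ⊕ V) :=
  Mt T.root T.parent T.pcolor T.zfun T.SLeaf T.SE1 T.SInR T.SLeafB T.SE1r α β γ

theorem decisionMap_ket (d : T.Col) :
    T.decisionMap α β γ (ket d) =
      Mcol T.root T.parent T.pcolor T.zfun T.SLeaf T.SE1 T.SInR T.SLeafB T.SE1r α β γ d := by
  have hd : ket d = PiLp.basisFun 2 ℂ T.Col d := (PiLp.basisFun_apply 2 ℂ T.Col d).symm
  rw [hd]
  exact Module.Basis.constr_basis _ _ _ _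

theorem decisionMap_edgeCol (r : T.RedEdge) :
    T.decisionMap α β γ (ket (T.edgeCol r)) = (γ : ℂ) • (ket (T.tail r) - ket (T.head r)) := by
  rw [decisionMap_ket]
  rcases r with w | v | z
  · simp [edgeCol, Mcol, tail, head, (isRed_of_mem_SE1r w.2).2]
  · rfl
  · rfl

theorem decisionMap_pseudoCol (r : T.RedEdge) :
    T.decisionMap α β γ (ket (T.pseudoCol r)) = (γ : ℂ) • (ket (T.tail r) + ket (T.head r)) := by
  rw [decisionMap_ket]
  rcases r with w | v | z <;> rfl

theorem decisionMap_plusVec (r : T.RedEdge) :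
    T.decisionMap α β γ (T.plusVec r) = (Real.sqrt 2 * γ : ℂ) • ket (T.tail r) := by
  have hcoeff : (Real.sqrt 2 * γ : ℂ) = (Real.sqrt 2 : ℂ)⁻¹ * 2 * γ := by
    rw [← sqrt_two_eq_inv_mul_two]
  rw [plusVec, map_smul, map_add, decisionMap_pseudoCol, decisionMap_edgeCol, hcoeff]
  module

theorem decisionMap_minusVec (r : T.RedEdge) :
    T.decisionMap α β γ (T.minusVec r) = (Real.sqrt 2 * γ : ℂ) • ket (T.head r) := by
  have hcoeff : (Real.sqrt 2 * γ : ℂ) = (Real.sqrt 2 : ℂ)⁻¹ * 2 * γ := by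
    rw [← sqrt_two_eq_inv_mul_two]
  rw [minusVec, map_smul, map_sub, decisionMap_pseudoCol, decisionMap_edgeCol, hcoeff]
  module

variable {α β γ}

theorem linearIndependent_decisionMap_redCol (hγ : γ ≠ 0) :
    LinearIndependent ℂ (T.decisionMap α β γ ∘ T.colBasis ∘ Sum.inr) := by
  have hket : LinearIndependent ℂ (Sum.elim (ket ∘ T.tail) (ket ∘ T.head)) := by
    have hends := (PiLp.basisFun 2 ℂ (V ⊕ V)).linearIndependent.comp _ T.endpoints_injective
    rwa [Sum.comp_elim, funext (PiLp.basisFun_apply 2 ℂ (V ⊕ V))] at hends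
  let c : T.RedEdge ⊕ T.RedEdge → ℂˣ := fun _ => Units.mk0 γ (Complex.ofReal_ne_zero.2 hγ)
  have hcols : T.decisionMap α β γ ∘ T.colBasis ∘ Sum.inr =
      c • Sum.elim (ket ∘ T.tail - ket ∘ T.head) (ket ∘ T.tail + ket ∘ T.head) := by
    ext1 x
    rw [Function.comp_apply, Function.comp_apply, colBasis_apply]
    rcases x with r | r
    · exact T.decisionMap_edgeCol α β γ r
    · exact T.decisionMap_pseudoCol α β γ r
  rw [hcols]
  exact (linearIndependent_sub_add (IsUnit.mk0 2 two_ne_zero) hket).units_smul c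

theorem decisionMap_kernelVec (hα : α ≠ 0) (hβ : β ≠ 0) (hγ : γ ≠ 0) (i : T.FreeCol) :
    T.decisionMap α β γ (T.kernelVec α β γ i) = 0 := by
  have hα' : (Real.sqrt 2 / α * α : ℂ) = Real.sqrt 2 :=
    div_mul_cancel₀ _ (Complex.ofReal_ne_zero.2 hα)
  have hβ' : (Real.sqrt 2 / β * β : ℂ) = Real.sqrt 2 :=
    div_mul_cancel₀ _ (Complex.ofReal_ne_zero.2 hβ)
  have hγ' : (γ : ℂ)⁻¹ * (Real.sqrt 2 * γ) = Real.sqrt 2 := by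
    rw [mul_left_comm, inv_mul_cancel₀ (Complex.ofReal_ne_zero.2 hγ), mul_one]
  have hblack : ∀ w : {w // w ∈ T.SE1b}, T.pcolor w.1 = true := fun w =>
    ((T.mem_SE1b w.1).1 w.2).2
  rcases i with (_ | z) | w | v | z | v <;>
    simp only [kernelVec, Sum.elim_inl, Sum.elim_inr, typeIroot_eq, typeIleaf_eq,
      typeII_family1_eq, typeII_family2_eq, typeII_family5_eq, typeII_family6_eq, map_add, map_smul,
      decisionMap_ket, decisionMap_plusVec, decisionMap_minusVec, Mcol, freeCol, hblack, if_true,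
      tail_redOut, head_leafEdge, tail_inr_inl, tail_inr_inr, head_inr_inl, T.parent_v₀, smul_smul,
      neg_mul, mul_neg, hα', hβ', hγ'] <;>
    module

end Kernel

end RedBranching

theorem typeI_typeII_basis_of_kernel_general (T : RedBranching V) {α β γ : ℝ}
    (hα : α ≠ 0) (hβ : β ≠ 0) (hγ : γ ≠ 0) :
    LinearIndependent ℂ (T.kernelVec α β γ) ∧
      Submodule.span ℂ (Set.range (T.kernelVec α β γ)) = LinearMap.ker (T.decisionMap α β γ) := by
  let c (i : T.FreeCol) : ℂˣ := Units.mk0 (T.freeCoeff α β i)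
    (RedBranching.freeCoeff_ne_zero hα hβ i)
  have hc (i : T.FreeCol) : T.kernelVec α β γ i - c i • T.colBasis (Sum.inl i) ∈ T.redSpan :=
    RedBranching.kernelVec_sub_mem_redSpan α β γ i
  exact ⟨linearIndependent_of_sub_smul_mem_span T.colBasis.linearIndependent c hc,
    span_eq_ker_of_sub_smul_mem_span T.colBasis.span_eq.ge
      (T.linearIndependent_decisionMap_redCol hγ) c hc (T.decisionMap_kernelVec hα hβ hγ)⟩

/-- The Type I vectors together with the Type II vectors of all black cycles form a basis of
the kernel of `M̃`.  The binary tree `𝒯` has a root `z₀` with a single red child `v₀`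
(which is internal), and every other internal vertex has exactly two children, one joined by
a black and one by a red edge; `rchild`/`bchild` give the red/black child of an internal
vertex, and `zfun v = z_v` is the leaf reached from `v` by following black edges. -/
theorem typeI_typeII_basis_of_kernel
    (root : V) (parent : V → V) (pcolor : V → Bool) (depth : V → ℕ)
    (hproot : parent root = root) (hdroot : depth root = 0)
    (hdparent : ∀ v, v ≠ root → depth (parent v) + 1 = depth v)
    (v₀ : V) (hv₀ : v₀ ≠ root) (hv₀p : parent v₀ = root) (hv₀c : pcolor v₀ = false)
    (hv₀in : ∃ u, u ≠ root ∧ parent u = v₀)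
    (hrootchild : ∀ u, u ≠ root → parent u = root → u = v₀)
    (hbin : ∀ v, v ≠ root → (∃ u, u ≠ root ∧ parent u = v) →
      ∃ b r, b ≠ r ∧ b ≠ root ∧ r ≠ root ∧ parent b = v ∧ parent r = v ∧
        pcolor b = true ∧ pcolor r = false ∧
        ∀ u, u ≠ root → parent u = v → (u = b ∨ u = r))
    (SIn SLeaf SInR SLeafB SE1 SE1r SE1b : Finset V)
    (hSIn : ∀ v, v ∈ SIn ↔ ∃ u, u ≠ root ∧ parent u = v)
    (hSLeaf : ∀ v, v ∈ SLeaf ↔ v ∉ SIn)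
    (hSInR : ∀ v, v ∈ SInR ↔ (v ≠ root ∧ v ∈ SIn ∧ pcolor v = false))
    (hSLeafB : ∀ v, v ∈ SLeafB ↔ (v ≠ root ∧ v ∉ SIn ∧ pcolor v = true))
    (hSE1 : ∀ w, w ∈ SE1 ↔ (w ≠ root ∧ w ∉ SInR ∧ w ∉ SLeafB))
    (hSE1r : ∀ w, w ∈ SE1r ↔ (w ∈ SE1 ∧ pcolor w = false))
    (hSE1b : ∀ w, w ∈ SE1b ↔ (w ∈ SE1 ∧ pcolor w = true))
    (rchild bchild zfun : V → V)
    (hrchild : ∀ v, v ∈ SIn → v ≠ root →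
      rchild v ≠ root ∧ parent (rchild v) = v ∧ pcolor (rchild v) = false)
    (hbchild : ∀ v, v ∈ SIn → v ≠ root →
      bchild v ≠ root ∧ parent (bchild v) = v ∧ pcolor (bchild v) = true)
    (hzfun : ∀ v, v ∈ SInR → zfun v ∈ SLeafB ∧ ∃ k : ℕ, zfun v = bchild^[k] v)
    (α β γ : ℝ) (hα : 0 < α) (hβ : 0 < β) (hγ : 0 < γ) :
    LinearIndependent ℂ
      (Sum.elim
        (Sum.elim (fun _ : Unit => typeIroot v₀ SLeaf SE1 SInR SLeafB SE1r α γ)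
          (typeIleaf SLeaf SE1 SInR SLeafB SE1r α γ))
        (typeII root parent rchild zfun SLeaf SE1 SInR SLeafB SE1r SE1b β γ)) ∧
    Submodule.span ℂ (Set.range
        (Sum.elim
          (Sum.elim (fun _ : Unit => typeIroot v₀ SLeaf SE1 SInR SLeafB SE1r α γ)
            (typeIleaf SLeaf SE1 SInR SLeafB SE1r α γ))
          (typeII root parent rchild zfun SLeaf SE1 SInR SLeafB SE1r SE1b β γ))) =
      LinearMap.ker (Mt root parent pcolor zfun SLeaf SE1 SInR SLeafB SE1r α β γ) := by
  have rchild_parent : ∀ c, c ≠ root → pcolor c = false → parent c ≠ root →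
      rchild (parent c) = c := fun c hc hred hp => by
    have hin : ∃ u, u ≠ root ∧ parent u = parent c := ⟨c, hc, rfl⟩
    obtain ⟨b, r, -, -, -, -, -, hb, -, hbr⟩ := hbin _ hp hin
    exact eq_of_red_siblings ⟨b, r, hb, hbr⟩ (hrchild _ ((hSIn _).2 hin) hp) ⟨hc, rfl, hred⟩
  let T : RedBranching V :=
    { root, parent, pcolor, v₀, rchild, zfun, SIn, SLeaf, SInR, SLeafB, SE1, SE1r, SE1b,
      mem_SIn := hSIn, mem_SLeaf := hSLeaf, mem_SInR := hSInR, mem_SLeafB := hSLeafB,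
      mem_SE1 := hSE1, mem_SE1r := hSE1r, mem_SE1b := hSE1b,
      v₀_mem_SInR := (hSInR v₀).2 ⟨hv₀, (hSIn v₀).2 hv₀in, hv₀c⟩,
      parent_v₀ := hv₀p, eq_v₀_of_parent_eq_root := hrootchild,
      rchild_spec := hrchild, rchild_parent,
      zfun_mem_SLeafB := fun v hv => (hzfun v hv).1 }
  exact typeI_typeII_basis_of_kernel_general T hα.ne' hβ.ne' hγ.ne'

end DecisionGraph

end
end
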